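/- Let (X,T) be a topological dynamical system with T a homeomorphism satisfying the marker property, and let d be a compatible metric with mdim(X,T) = mdim_M^+(T,X,d). Then mdim_M^-(T,X,d) = mdim_M^+(T,X,d) = sup_{μ∈M(X,T)} liminf_{ε→0} (1/log(1/ε)) inf_{diam P≤ε} h_μ(T,P) = sup_{μ∈M(X,T)} limsup_{ε→0} (1/log(1/ε)) inf_{diam P≤ε} h_μ(T,P) = liminf_{ε→0} sup_{μ∈M(X,T)} (1/log(1/ε)) inf_{diam P≤ε} h_μ(T,P) = limsup_{ε→0} sup_{μ∈M(X,T)} (1/log(1/ε)) inf_{diam P≤ε} h_μ(T,P), where the infima are over finite Borel partitions P of X with d-diameter at most ε. -/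

import Mathlib

open Filter MeasureTheory Set
open scoped ENNReal Topology

noncomputable section

namespace MMD

variable {X : Type*}

/-- The `n`-th Bowen metric `d_n(x,y) = max_{0 ≤ j ≤ n-1} d(T^j x, T^j y)`. -/
noncomputable def bowenDist [PseudoMetricSpace X] (T : X → X) (n : ℕ) (x y : X) : ℝ :=
  ⨆ j : Fin n, dist (T^[(j : ℕ)] x) (T^[(j : ℕ)] y)

/-- `r_n(T,d,ε,Z)`: minimal cardinality of an `(n,ε)`-spanning set of `Z`. -/
noncomputable def spanNum [PseudoMetricSpace X] (T : X → X) (n : ℕ) (ε : ℝ) (Z : Set X) : ℕ :=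
  sInf {k | ∃ E : Finset X, E.card = k ∧ ∀ z ∈ Z, ∃ y ∈ E, bowenDist T n z y < ε}

/-- `s_n(T,d,ε,Z)`: maximal cardinality of an `(n,ε)`-separated subset of `Z`. -/
noncomputable def sepNum [PseudoMetricSpace X] (T : X → X) (n : ℕ) (ε : ℝ) (Z : Set X) : ℕ :=
  sSup {k | ∃ F : Finset X, ↑F ⊆ Z ∧ F.card = k ∧
    ∀ x ∈ F, ∀ y ∈ F, x ≠ y → ε ≤ bowenDist T n x y}

/-- `limsup_{n→∞} (1/n) log r_n(T,d,ε,X)`. -/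
noncomputable def spanGrowth [PseudoMetricSpace X] (T : X → X) (ε : ℝ) : ℝ≥0∞ :=
  Filter.limsup (fun n : ℕ => ENNReal.ofReal (Real.log (spanNum T n ε Set.univ)) / (n : ℝ≥0∞))
    Filter.atTop

/-- Upper metric mean dimension. -/
noncomputable def mdimMUpper [PseudoMetricSpace X] (T : X → X) : ℝ≥0∞ :=
  Filter.limsup (fun ε : ℝ => spanGrowth T ε / ENNReal.ofReal (Real.log (1 / ε)))
    (nhdsWithin 0 (Set.Ioi 0))

/-- Lower metric mean dimension. -/
noncomputable def mdimMLower [PseudoMetricSpace X] (T : X → X) : ℝ≥0∞ :=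
  Filter.liminf (fun ε : ℝ => spanGrowth T ε / ENNReal.ofReal (Real.log (1 / ε)))
    (nhdsWithin 0 (Set.Ioi 0))

/-- A finite (Borel) partition given as a finite set of measurable, pairwise disjoint sets
covering the space. -/
def IsFinPartition {Y : Type*} [MeasurableSpace Y] (P : Finset (Set Y)) : Prop :=
  (∀ s ∈ P, MeasurableSet s) ∧ (∀ s ∈ P, ∀ t ∈ P, s ≠ t → Disjoint s t) ∧
    ⋃₀ (P : Set (Set Y)) = Set.univ

/-- Mutual information `I(ξ;η)` of two random variables, as the supremum over finite
measurable partitions of the target spaces. -/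
noncomputable def mutualInfo {Ω A B : Type*} [MeasurableSpace Ω] [MeasurableSpace A]
    [MeasurableSpace B] (P : Measure Ω) (ξ : Ω → A) (η : Ω → B) : ℝ≥0∞ :=
  ⨆ (p : Finset (Set A)) (_ : IsFinPartition p) (q : Finset (Set B)) (_ : IsFinPartition q),
    ENNReal.ofReal (∑ s ∈ p, ∑ t ∈ q,
      (P (ξ ⁻¹' s ∩ η ⁻¹' t)).toReal *
        Real.log ((P (ξ ⁻¹' s ∩ η ⁻¹' t)).toReal /
          ((P (ξ ⁻¹' s)).toReal * (P (η ⁻¹' t)).toReal)))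

/-- The `L^∞` rate distortion function `R_{μ,L∞}(ε,s)`: the infimum of `I(ξ;η)/n` over all
`n ≥ 1` and all joint distributions `ν` of `(ξ, (η_0,…,η_{n-1}))` such that `ξ` has law `μ`,
the `η_k` take (almost surely) finitely many values, and
`E(#{0 ≤ k ≤ n-1 : d(T^k ξ, η_k) ≥ ε}) < s n`. -/
noncomputable def RDistLInftyS [PseudoMetricSpace X] [MeasurableSpace X] (T : X → X)
    (μ : Measure X) (ε s : ℝ) : ℝ≥0∞ :=
  ⨅ (n : ℕ) (_ : 0 < n) (ν : Measure (X × (Fin n → X))) (_ : IsProbabilityMeasure ν)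
    (_ : ν.map Prod.fst = μ) (_ : ∃ S : Finset X, ν {p | ∀ k, p.2 k ∈ S} = 1)
    (_ : ∫⁻ p, (Nat.card {k : Fin n // ε ≤ dist (T^[(k : ℕ)] p.1) (p.2 k)} : ℝ≥0∞) ∂ν
        < ENNReal.ofReal (s * n)),
    mutualInfo ν Prod.fst Prod.snd / (n : ℝ≥0∞)

/-- `R_{μ,L∞}(ε) = lim_{s→0} R_{μ,L∞}(ε,s)` (the limit equals the supremum over `s > 0`
by monotonicity). -/
noncomputable def RDistLInfty [PseudoMetricSpace X] [MeasurableSpace X] (T : X → X)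
    (μ : Measure X) (ε : ℝ) : ℝ≥0∞ :=
  ⨆ (s : ℝ) (_ : 0 < s), RDistLInftyS T μ ε s

/-- The `L¹` rate distortion function `R_{μ,1}(ε)`. -/
noncomputable def RDistL1 [PseudoMetricSpace X] [MeasurableSpace X] (T : X → X)
    (μ : Measure X) (ε : ℝ) : ℝ≥0∞ :=
  ⨅ (n : ℕ) (_ : 0 < n) (ν : Measure (X × (Fin n → X))) (_ : IsProbabilityMeasure ν)
    (_ : ν.map Prod.fst = μ) (_ : ∃ S : Finset X, ν {p | ∀ k, p.2 k ∈ S} = 1)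
    (_ : ∫⁻ p, ∑ k : Fin n, ENNReal.ofReal (dist (T^[(k : ℕ)] p.1) (p.2 k)) ∂ν
        < ENNReal.ofReal (ε * n)),
    mutualInfo ν Prod.fst Prod.snd / (n : ℝ≥0∞)

/-- `R^δ_μ(T,n,ε)`: minimal number of Bowen `(n,ε)`-balls whose union has `μ`-measure
greater than `1 - δ`. -/
noncomputable def katokNum [PseudoMetricSpace X] [MeasurableSpace X] (T : X → X)
    (μ : Measure X) (n : ℕ) (ε δ : ℝ) : ℕ :=
  sInf {k | ∃ E : Finset X, E.card = k ∧
    ENNReal.ofReal (1 - δ) < μ (⋃ x ∈ E, {y | bowenDist T n x y < ε})}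

/-- `h̄^K_μ(T,ε,δ)`. -/
noncomputable def katokUpperD [PseudoMetricSpace X] [MeasurableSpace X] (T : X → X)
    (μ : Measure X) (ε δ : ℝ) : ℝ≥0∞ :=
  Filter.limsup (fun n : ℕ => ENNReal.ofReal (Real.log (katokNum T μ n ε δ)) / (n : ℝ≥0∞))
    Filter.atTop

/-- `ḥ^K_μ(T,ε,δ)`. -/
noncomputable def katokLowerD [PseudoMetricSpace X] [MeasurableSpace X] (T : X → X)
    (μ : Measure X) (ε δ : ℝ) : ℝ≥0∞ :=
  Filter.liminf (fun n : ℕ => ENNReal.ofReal (Real.log (katokNum T μ n ε δ)) / (n : ℝ≥0∞))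
    Filter.atTop

/-- `h̄^K_μ(T,ε) = lim_{δ→0} h̄^K_μ(T,ε,δ)` (equal to the supremum over `δ ∈ (0,1)` by
monotonicity). -/
noncomputable def katokUpper [PseudoMetricSpace X] [MeasurableSpace X] (T : X → X)
    (μ : Measure X) (ε : ℝ) : ℝ≥0∞ :=
  ⨆ (δ : ℝ) (_ : δ ∈ Set.Ioo (0 : ℝ) 1), katokUpperD T μ ε δ

/-- `ḥ^K_μ(T,ε) = lim_{δ→0} ḥ^K_μ(T,ε,δ)`. -/
noncomputable def katokLower [PseudoMetricSpace X] [MeasurableSpace X] (T : X → X)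
    (μ : Measure X) (ε : ℝ) : ℝ≥0∞ :=
  ⨆ (δ : ℝ) (_ : δ ∈ Set.Ioo (0 : ℝ) 1), katokLowerD T μ ε δ

/-- The empirical measure `(1/n) Σ_{j=0}^{n-1} δ_{T^j x}`. -/
noncomputable def empMeas [MeasurableSpace X] (T : X → X) (n : ℕ) (x : X) : Measure X :=
  (n : ℝ≥0∞)⁻¹ • ∑ j ∈ Finset.range n, Measure.dirac (T^[j] x)

/-- Pfister–Sullivan entropy `PS_μ(T,d,ε)`: infimum over weak* open neighborhoods `F` of `μ`
of `limsup_n (1/n) log s_n(T,d,ε,X_{n,F})`, where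
`X_{n,F} = {x : (1/n) Σ_{j<n} δ_{T^j x} ∈ F}`. -/
noncomputable def PSent [MetricSpace X] [MeasurableSpace X] [OpensMeasurableSpace X]
    (T : X → X) (μ : ProbabilityMeasure X) (ε : ℝ) : ℝ≥0∞ :=
  ⨅ (F : Set (ProbabilityMeasure X)) (_ : IsOpen F) (_ : μ ∈ F),
    Filter.limsup (fun n : ℕ => ENNReal.ofReal (Real.log (sepNum T n ε
      {x : X | ∃ h : IsProbabilityMeasure (empMeas T n x),
        (⟨empMeas T n x, h⟩ : ProbabilityMeasure X) ∈ F})) / (n : ℝ≥0∞)) Filter.atTop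

/-- Partition entropy `H_μ(P) = Σ_{A∈P} -μ(A) log μ(A)`. -/
noncomputable def entP [MeasurableSpace X] (μ : Measure X) (P : Finset (Set X)) : ℝ≥0∞ :=
  ∑ A ∈ P, ENNReal.ofReal (-((μ A).toReal * Real.log ((μ A).toReal)))

/-- The join `P^n = ∨_{j=0}^{n-1} T^{-j} P`. -/
noncomputable def joinN (T : X → X) (P : Finset (Set X)) (n : ℕ) : Finset (Set X) :=
  letI : DecidableEq (Set X) := Classical.decEq _
  (Fintype.piFinset (fun _ : Fin n => P)).image (fun f => ⋂ j : Fin n, T^[(j : ℕ)] ⁻¹' f j)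

/-- `h_μ(T,P) = lim_n H_μ(P^n)/n` (the limit exists and equals the liminf). -/
noncomputable def entRate [MeasurableSpace X] (T : X → X) (μ : Measure X)
    (P : Finset (Set X)) : ℝ≥0∞ :=
  Filter.liminf (fun n : ℕ => entP μ (joinN T P n) / (n : ℝ≥0∞)) Filter.atTop

/-- `inf { h_μ(T,P) : P a finite Borel partition with diam P ≤ ε }`. -/
noncomputable def infEntRate [PseudoMetricSpace X] [MeasurableSpace X] (T : X → X)
    (μ : Measure X) (ε : ℝ) : ℝ≥0∞ :=
  ⨅ (P : Finset (Set X)) (_ : IsFinPartition P) (_ : ∀ s ∈ P, Metric.diam s ≤ ε),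
    entRate T μ P

/-- Kolmogorov–Sinai entropy `h_μ(T)`. -/
noncomputable def ksEntropy [MeasurableSpace X] (T : X → X) (μ : Measure X) : ℝ≥0∞ :=
  ⨆ (P : Finset (Set X)) (_ : IsFinPartition P), entRate T μ P

/-- A finite open cover. -/
def IsFinOpenCover [TopologicalSpace X] (α : Finset (Set X)) : Prop :=
  (∀ A ∈ α, IsOpen A) ∧ ⋃₀ (α : Set (Set X)) = Set.univ

/-- `ord(β) = max_x #{B ∈ β : x ∈ B} - 1`. -/
noncomputable def ordCover (β : Finset (Set X)) : ℕ :=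
  sSup {k | ∃ x : X, Nat.card {B : Set X // B ∈ β ∧ x ∈ B} = k} - 1

/-- `D(α) = min_{β ≻ α} ord(β)`, over finite open covers `β` refining `α`. -/
noncomputable def Dcover [TopologicalSpace X] (α : Finset (Set X)) : ℕ :=
  sInf {k | ∃ β : Finset (Set X), IsFinOpenCover β ∧ (∀ B ∈ β, ∃ A ∈ α, B ⊆ A) ∧
    ordCover β = k}

/-- Mean (topological) dimension `mdim(X,T) = sup_α lim_n D(α^n)/n`. -/
noncomputable def mdimTop [TopologicalSpace X] (T : X → X) : ℝ≥0∞ :=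
  ⨆ (α : Finset (Set X)) (_ : IsFinOpenCover α),
    Filter.liminf (fun n : ℕ => (Dcover (joinN T α n) : ℝ≥0∞) / (n : ℝ≥0∞)) Filter.atTop

/-- The marker property for a homeomorphism. -/
def MarkerProperty [TopologicalSpace X] (T : X ≃ₜ X) : Prop :=
  ∀ N : ℕ, 0 < N → ∃ U : Set X, IsOpen U ∧
    (∀ n : ℕ, 1 ≤ n → n ≤ N → U ∩ (⇑T)^[n] '' U = ∅) ∧
    ⋃ n : ℤ, ⇑(T.toEquiv ^ n) '' U = Set.univ

/-- Upper dimension `limsup_{ε→0} F(μ,ε)/log(1/ε)` associated with a candidate `F`. -/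
noncomputable def dimFUpper [MeasurableSpace X] (F : Measure X → ℝ → ℝ≥0∞)
    (μ : Measure X) : ℝ≥0∞ :=
  Filter.limsup (fun ε : ℝ => F μ ε / ENNReal.ofReal (Real.log (1 / ε)))
    (nhdsWithin 0 (Set.Ioi 0))

/-- Lower dimension `liminf_{ε→0} F(μ,ε)/log(1/ε)` associated with a candidate `F`. -/
noncomputable def dimFLower [MeasurableSpace X] (F : Measure X → ℝ → ℝ≥0∞)
    (μ : Measure X) : ℝ≥0∞ :=
  Filter.liminf (fun ε : ℝ => F μ ε / ENNReal.ofReal (Real.log (1 / ε)))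
    (nhdsWithin 0 (Set.Ioi 0))

/-- A candidate function: for each invariant probability measure `μ`, `F(μ,·)` is
non-decreasing as `ε` decreases, and `F(μ,ε) → h_μ(T)` as `ε → 0⁺`. -/
def IsCandidate [MeasurableSpace X] (T : X → X) (F : Measure X → ℝ → ℝ≥0∞) : Prop :=
  ∀ μ : Measure X, IsProbabilityMeasure μ → MeasurePreserving T μ μ →
    (∀ ε₁ ε₂ : ℝ, 0 < ε₁ → ε₁ ≤ ε₂ → F μ ε₂ ≤ F μ ε₁) ∧
    Filter.Tendsto (F μ) (nhdsWithin 0 (Set.Ioi 0)) (nhds (ksEntropy T μ))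

end MMD

open MMD

/-!
Lower bound. Fix an open cover `α` and Lipschitz functions, one below each member of `α`, whose
maximum is at least `1`. Multiply their values along an orbit of length `n` by `n` and subtract
integers `a` from `{0, …, n - 1}`, one for each coordinate. The superlevel sets of the result, for
thresholds between `0` and `1`, form a refinement of `α ^ n`, so for every `a` there is a point at
which at least `D(α ^ n)` coordinates have their value in `(0, 1)`. If the points found for `a` and
`b` are within Bowen distance `r`, then `a` and `b` nearly agree at the coordinates caught for both.
Hence a Bowen ball of radius `r` holds at most a fraction `2 ^ (|α| n) (L r + 2 / n) ^ D(α ^ n)` of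
the family. On the other hand, a partition `P` of diameter at most `r` gives a code for orbits of
length `m` whose length is at most a continuous function with integral about `H_μ(P ^ m)`, and a
family that is so spread out cannot be coded cheaply. Averaging over the `m` ways of cutting an
orbit into blocks of length `m`, in the limit `n → ∞` one finds an invariant measure `μ`,
independent of `r` and `P`, such that `h_μ(T, P)` is at least about `(mdim - δ) log (1 / r)`.

Upper bound. Away from the points whose period divides a fixed number, Borel markers cut the orbits
into blocks, nearly all of length `n`. Label a point by its position in its block and by the index
of a point of a minimal `(n, ε)`-spanning set close to the start of the block. This gives a
partition of diameter at most `2 ε` whose entropy is about `(1 / n) log r_n(ε)` for every invariant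
measure.
Replacing `ε` by `2 ε` does not change the limits, so all the quantities lie between the mean
dimension and the corresponding metric mean dimension.
-/

namespace MMD

/-! ### Superlevel covers -/

section Superlevel

variable {ι X : Type*}

theorem card_superlevel_le [Fintype ι] {R : Type*} [LinearOrder R] (t : ι → R) (a b : R)
    (F : Finset (Finset ι)) (hF : ∀ σ ∈ F, ∃ c ∈ Ioo a b, ∀ i, i ∈ σ ↔ c < t i) :
    F.card ≤ (Finset.univ.filter fun i => t i ∈ Ioo a b).card + 1 := by
  classical
  set Z : Finset ι := Finset.univ.filter fun i => b ≤ t i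
  set Y : Finset ι := Finset.univ.filter fun i => t i ∈ Ioo a b
  have mem_Icc : ∀ σ ∈ F, σ.card ∈ Finset.Icc Z.card (Z.card + Y.card) := by
    intro σ hσ
    obtain ⟨c, ⟨hac, hcb⟩, hc⟩ := hF σ hσ
    have hZσ : Z ⊆ σ := fun i hi => (hc i).2 (hcb.trans_le (Finset.mem_filter.1 hi).2)
    have hσZY : σ ⊆ Z ∪ Y := by
      intro i hi
      have hai := hac.trans ((hc i).1 hi)
      rcases le_or_gt b (t i) with h | h <;> simp [Z, Y, h, hai]
    exact Finset.mem_Icc.2 ⟨Finset.card_le_card hZσ,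
      (Finset.card_le_card hσZY).trans (Finset.card_union_le _ _)⟩
  have card_injOn : Set.InjOn Finset.card (F : Set (Finset ι)) := by
    intro σ hσ τ hτ hcard
    obtain ⟨c, -, hc⟩ := hF σ hσ
    obtain ⟨c', -, hc'⟩ := hF τ hτ
    rcases le_total c c' with h | h
    · exact (Finset.eq_of_subset_of_card_le
        (fun i hi => (hc i).2 (h.trans_lt ((hc' i).1 hi))) hcard.le).symm
    · exact Finset.eq_of_subset_of_card_le
        (fun i hi => (hc' i).2 (h.trans_lt ((hc i).1 hi))) hcard.ge
  have := Finset.card_le_card_of_injOn Finset.card mem_Icc card_injOn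
  rw [Nat.card_Icc] at this
  omega

/-- The points at which `σ` is the set of indices `i` with `c < t i x`, for some threshold
`c ∈ (0, 1)` that is none of the values `t i x`; avoiding the values makes the set open. -/
def superlevelPiece (t : ι → X → ℝ) (σ : Finset ι) : Set X :=
  ⋃ c ∈ Ioo (0 : ℝ) 1, {x | ∀ i, (i ∈ σ → c < t i x) ∧ (i ∉ σ → t i x < c)}

theorem mem_superlevelPiece {t : ι → X → ℝ} {σ : Finset ι} {x : X} :
    x ∈ superlevelPiece t σ ↔
      ∃ c ∈ Ioo (0 : ℝ) 1, ∀ i, (i ∈ σ → c < t i x) ∧ (i ∉ σ → t i x < c) := by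
  simp [superlevelPiece]

theorem isOpen_superlevelPiece [Finite ι] [TopologicalSpace X] {t : ι → X → ℝ}
    (ht : ∀ i, Continuous (t i)) (σ : Finset ι) : IsOpen (superlevelPiece t σ) := by
  refine isOpen_biUnion fun c _ => ?_
  simp only [ofPred_forall, ofPred_and]
  exact isOpen_iInter_of_finite fun i =>
    (isOpen_iInter_of_finite fun _ => isOpen_lt continuous_const (ht i)).inter
      (isOpen_iInter_of_finite fun _ => isOpen_lt (ht i) continuous_const)

theorem exists_mem_superlevelPiece [Finite ι] (t : ι → X → ℝ) (x : X) :
    ∃ σ, x ∈ superlevelPiece t σ := by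
  classical
  have := Fintype.ofFinite ι
  obtain ⟨c, hc, hcx⟩ : (Ioo (0 : ℝ) 1 \ range fun i => t i x).Nonempty :=
    ((Ioo_infinite one_pos).sdiff (finite_range _)).nonempty
  refine ⟨Finset.univ.filter fun i => c < t i x, mem_superlevelPiece.2 ⟨c, hc, fun i => ?_⟩⟩
  have hne : t i x ≠ c := fun h => hcx ⟨i, h⟩
  simpa using fun h => lt_of_le_of_ne h hne

variable [Fintype ι]

open Classical in
theorem card_superlevelPiece_le (t : ι → X → ℝ) (x : X) :
    (Finset.univ.filter fun σ => x ∈ superlevelPiece t σ).card ≤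
      (Finset.univ.filter fun i => t i x ∈ Ioo 0 1).card + 1 := by
  refine card_superlevel_le (fun i => t i x) 0 1 _ fun σ hσ => ?_
  obtain ⟨c, hc, h⟩ := mem_superlevelPiece.1 (Finset.mem_filter.1 hσ).2
  exact ⟨c, hc, fun i => ⟨(h i).1, fun hlt => of_not_not fun hi => ((h i).2 hi).not_gt hlt⟩⟩

open Classical in
theorem exists_ordCover_eq [Nonempty X] (β : Finset (Set X)) :
    ∃ x, ordCover β = (β.filter (x ∈ ·)).card - 1 := by
  have hcard : ∀ x, Nat.card {B : Set X // B ∈ β ∧ x ∈ B} = (β.filter (x ∈ ·)).card := fun x =>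
    Nat.subtype_card _ (by simp)
  obtain ⟨x, hx⟩ := Nat.sSup_mem (s := {k | ∃ x : X, Nat.card {B : Set X // B ∈ β ∧ x ∈ B} = k})
    ⟨_, Classical.arbitrary X, rfl⟩
    ⟨β.card, by rintro _ ⟨x, rfl⟩; exact (hcard x).trans_le (Finset.card_filter_le _ _)⟩
  exact ⟨x, by rw [ordCover, ← hx, hcard]⟩

theorem exists_Dcover_le_card [TopologicalSpace X] [Nonempty X] {t : ι → X → ℝ}
    (ht : ∀ i, Continuous (t i)) {α : Finset (Set X)}
    (hα : ∀ σ, (superlevelPiece t σ).Nonempty → ∃ A ∈ α, superlevelPiece t σ ⊆ A) :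
    ∃ x, Dcover α ≤ (Finset.univ.filter fun i => t i x ∈ Ioo 0 1).card := by
  classical
  set β : Finset (Set X) :=
    (Finset.univ.filter fun σ => (superlevelPiece t σ).Nonempty).image (superlevelPiece t)
  have hβ : ∀ B ∈ β, ∃ σ, (superlevelPiece t σ).Nonempty ∧ superlevelPiece t σ = B := by simp [β]
  have isFinOpenCover_β : IsFinOpenCover β := by
    refine ⟨fun B hB => ?_, eq_univ_of_forall fun x => ?_⟩
    · obtain ⟨σ, -, rfl⟩ := hβ B hB
      exact isOpen_superlevelPiece ht σ
    · obtain ⟨σ, hσ⟩ := exists_mem_superlevelPiece t x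
      exact ⟨_, by simpa [β] using ⟨σ, ⟨x, hσ⟩, rfl⟩, hσ⟩
  have β_refines : ∀ B ∈ β, ∃ A ∈ α, B ⊆ A := by
    intro B hB
    obtain ⟨σ, hne, rfl⟩ := hβ B hB
    exact hα σ hne
  obtain ⟨x, hx⟩ := exists_ordCover_eq β
  have hfilter : β.filter (x ∈ ·) ⊆
      (Finset.univ.filter fun σ => x ∈ superlevelPiece t σ).image (superlevelPiece t) := by
    intro B hB
    obtain ⟨σ, -, rfl⟩ := hβ B (Finset.mem_filter.1 hB).1
    exact Finset.mem_image_of_mem _ (by simpa using (Finset.mem_filter.1 hB).2)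
  have hcard := (Finset.card_le_card hfilter).trans Finset.card_image_le
  refine ⟨x, ?_⟩
  calc Dcover α ≤ ordCover β := Nat.sInf_le ⟨β, isFinOpenCover_β, β_refines, rfl⟩
    _ ≤ _ := by
      rw [hx]
      exact Nat.sub_le_of_le_add (hcard.trans (card_superlevelPiece_le t x))

end Superlevel

section Join

variable {X : Type*}

theorem mem_joinN {T : X → X} {P : Finset (Set X)} {n : ℕ} {S : Set X} :
    S ∈ joinN T P n ↔
      ∃ f : Fin n → Set X, (∀ j, f j ∈ P) ∧ ⋂ j : Fin n, T^[(j : ℕ)] ⁻¹' f j = S := by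
  classical
  simp [joinN, Fintype.mem_piFinset]

/- If `f A` vanishes off `A`, an index `(A, j)` of a superlevel set forces `T^j x ∈ A`; if `f A`
reaches `1` for some `A`, every `j` occurs in every superlevel set. -/
theorem exists_Dcover_joinN_le_card [TopologicalSpace X] [Nonempty X] {T : X → X}
    (hT : Continuous T) {α : Finset (Set X)} {f : Set X → X → ℝ}
    (hf : ∀ A ∈ α, Continuous (f A)) (hf_mem : ∀ A ∈ α, ∀ x, 0 < f A x → x ∈ A)
    (hf_one : ∀ x, ∃ A ∈ α, 1 ≤ f A x) {n M : ℕ} (a : α × Fin n → Fin M) :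
    ∃ x, Dcover (joinN T α n) ≤ (Finset.univ.filter fun i : α × Fin n =>
      M * f i.1 (T^[i.2] x) - a i ∈ Ioo (0 : ℝ) 1).card := by
  refine exists_Dcover_le_card (t := fun i x => M * f i.1 (T^[i.2] x) - a i)
    (fun i => ((hf i.1 i.1.2).comp (hT.iterate _)).const_mul _ |>.sub continuous_const)
    fun σ hσ => ?_
  obtain ⟨x, hx⟩ := hσ
  obtain ⟨c, hc, hcx⟩ := mem_superlevelPiece.1 hx
  have exists_index_mem : ∀ j : Fin n, ∃ A : α, (A, j) ∈ σ := by
    intro j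
    obtain ⟨A, hA, hfA⟩ := hf_one (T^[j] x)
    refine ⟨⟨A, hA⟩, of_not_not fun hσA => ?_⟩
    have hlt := (hcx (⟨A, hA⟩, j)).2 hσA
    have ha : ((a (⟨A, hA⟩, j) : ℕ) : ℝ) + 1 ≤ M := by exact_mod_cast (a (⟨A, hA⟩, j)).2
    have hM : (M : ℝ) ≤ M * f A (T^[j] x) := le_mul_of_one_le_right (Nat.cast_nonneg M) hfA
    linarith [hc.2]
  choose A hA using exists_index_mem
  refine ⟨⋂ j : Fin n, T^[j] ⁻¹' (A j : Set X), mem_joinN.2 ⟨_, fun j => (A j).2, rfl⟩, ?_⟩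
  intro y hy
  obtain ⟨c', hc', hcy⟩ := mem_superlevelPiece.1 hy
  refine mem_iInter.2 fun j => hf_mem _ (A j).2 _ ?_
  have hlt := (hcy (A j, j)).1 (hA j)
  have : (0 : ℝ) ≤ (a (A j, j) : ℕ) := Nat.cast_nonneg _
  exact pos_of_mul_pos_right (by linarith [hc'.1]) (Nat.cast_nonneg M)

end Join

/-! ### Large families of points of high order -/

section BowenDist

variable {X : Type*} [PseudoMetricSpace X] {T : X → X} {n : ℕ} {x y z : X} {r : ℝ}

theorem bowenDist_nonneg : 0 ≤ bowenDist T n x y :=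
  Real.iSup_nonneg fun _ => dist_nonneg

theorem bowenDist_le_iff (hr : 0 ≤ r) :
    bowenDist T n x y ≤ r ↔ ∀ j < n, dist (T^[j] x) (T^[j] y) ≤ r := by
  refine ⟨fun h j hj => ?_, fun h => Real.iSup_le (fun j => h j j.2) hr⟩
  exact (le_ciSup (finite_range fun j : Fin n => dist (T^[j] x) (T^[j] y)).bddAbove ⟨j, hj⟩).trans h

theorem dist_iterate_le_bowenDist {j : ℕ} (hj : j < n) :
    dist (T^[j] x) (T^[j] y) ≤ bowenDist T n x y :=
  (bowenDist_le_iff bowenDist_nonneg).1 le_rfl j hj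

theorem bowenDist_lt_iff (hr : 0 < r) :
    bowenDist T n x y < r ↔ ∀ j < n, dist (T^[j] x) (T^[j] y) < r := by
  refine ⟨fun h j hj => (dist_iterate_le_bowenDist hj).trans_lt h, fun h => ?_⟩
  rcases isEmpty_or_nonempty (Fin n) with hn | hn
  · rwa [bowenDist, Real.iSup_of_isEmpty]
  · obtain ⟨j, hj⟩ := exists_eq_ciSup_of_finite (f := fun j : Fin n => dist (T^[j] x) (T^[j] y))
    rw [bowenDist, ← hj]
    exact h j j.2

theorem bowenDist_comm : bowenDist T n x y = bowenDist T n y x := by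
  simp only [bowenDist, dist_comm]

theorem bowenDist_triangle : bowenDist T n x z ≤ bowenDist T n x y + bowenDist T n y z :=
  (bowenDist_le_iff (add_nonneg bowenDist_nonneg bowenDist_nonneg)).2 fun _ hj =>
    (dist_triangle _ _ _).trans
      (add_le_add (dist_iterate_le_bowenDist hj) (dist_iterate_le_bowenDist hj))

end BowenDist

section Counting

variable {ι κ : Type*} [Fintype ι]

theorem card_le_add_one_of_sub_le {s : Finset ℕ} {w : ℝ} (hw : 0 ≤ w)
    (hs : ∀ a ∈ s, ∀ b ∈ s, (a : ℝ) - b ≤ w) : (s.card : ℝ) ≤ w + 1 := by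
  rcases s.eq_empty_or_nonempty with rfl | hne
  · rw [Finset.card_empty, Nat.cast_zero]
    positivity
  set b := s.min' hne
  have hsub : s ⊆ Finset.Icc b (b + ⌊w⌋₊) := fun a ha => by
    have hcast : ((a - b : ℕ) : ℝ) ≤ w := by
      rw [Nat.cast_sub (s.min'_le a ha)]
      exact hs a ha b (s.min'_mem hne)
    exact Finset.mem_Icc.2 ⟨s.min'_le a ha, by have := Nat.le_floor hcast; omega⟩
  have hcard : s.card ≤ ⌊w⌋₊ + 1 := by simpa [add_assoc] using Finset.card_le_card hsub
  calc (s.card : ℝ) ≤ ⌊w⌋₊ + 1 := by exact_mod_cast hcard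
    _ ≤ w + 1 := by gcongr; exact Nat.floor_le hw

theorem card_le_of_forall_fiber_le {β : Type*} [Fintype β] [DecidableEq β]
    (s : Finset κ) (Q : κ → β) {c : ℝ}
    (hc : ∀ q, ((s.filter (Q · = q)).card : ℝ) ≤ c) : (s.card : ℝ) ≤ Fintype.card β * c := by
  have hsum := Finset.card_eq_sum_card_fiberwise (f := Q) (s := s) (t := Finset.univ) (by simp)
  calc (s.card : ℝ) = ∑ q, ((s.filter (Q · = q)).card : ℝ) := by exact_mod_cast hsum
    _ ≤ Fintype.card β * c := by
        simpa using Finset.sum_le_card_nsmul Finset.univ _ c fun q _ => hc q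

variable [DecidableEq ι]

theorem card_le_of_card_image_eval_le [Fintype κ] [DecidableEq κ] [Nonempty κ]
    (s : Finset (ι → κ)) (Q : Finset ι) {c : ℝ}
    (hQ : ∀ i ∈ Q, ((s.image (· i)).card : ℝ) ≤ c) :
    (s.card : ℝ) ≤ Fintype.card (ι → κ) * (c / Fintype.card κ) ^ Q.card := by
  set V : ι → Finset κ := fun i => if i ∈ Q then s.image (· i) else Finset.univ
  have hsub : s ⊆ Fintype.piFinset V := fun a ha => Fintype.mem_piFinset.2 fun i => by
    by_cases hi : i ∈ Q
    · simpa [V, hi] using ⟨a, ha, rfl⟩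
    · simp [V, hi]
  have hκ : (Fintype.card κ : ℝ) ≠ 0 := by exact_mod_cast Fintype.card_ne_zero
  calc (s.card : ℝ) ≤ ∏ i, ((V i).card : ℝ) := by
        exact_mod_cast (Finset.card_le_card hsub).trans_eq (Fintype.card_piFinset V)
    _ ≤ ∏ i, Fintype.card κ * if i ∈ Q then c / Fintype.card κ else 1 := by
        refine Finset.prod_le_prod (fun i _ => Nat.cast_nonneg _) fun i _ => ?_
        by_cases hi : i ∈ Q
        · simpa [V, hi, mul_div_cancel₀ _ hκ] using hQ i hi
        · simp [V, hi]
    _ = Fintype.card (ι → κ) * (c / Fintype.card κ) ^ Q.card := by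
        rw [Finset.prod_mul_distrib, Finset.prod_ite_mem]
        simp [div_pow]

/- Two members of `s` whose `i`-th number is caught in the window `(a i, a i + 1)` have windows at
distance at most `w + 1`. So once the set of caught indices is fixed, at least `D` coordinates have
only `w + 2` values. -/
theorem card_le_of_sub_mem_Ioo {n D : ℕ} (hn : 0 < n) (g : (ι → Fin n) → ι → ℝ)
    (hD : ∀ a, D ≤ (Finset.univ.filter fun i => g a i - a i ∈ Ioo (0 : ℝ) 1).card) {w : ℝ}
    (hw : 0 ≤ w) (hwn : (w + 2) / n ≤ 1) (s : Finset (ι → Fin n))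
    (hs : ∀ a ∈ s, ∀ b ∈ s, ∀ i, g a i - g b i ≤ w) :
    (s.card : ℝ) ≤
      Fintype.card (ι → Fin n) * (2 ^ Fintype.card ι * ((w + 2) / n) ^ D) := by
  have : Nonempty (Fin n) := ⟨⟨0, hn⟩⟩
  set Q : (ι → Fin n) → Finset ι := fun a =>
    Finset.univ.filter fun i => g a i - a i ∈ Ioo (0 : ℝ) 1
  have card_values : ∀ q, ∀ i ∈ q,
      ((((s.filter (Q · = q)).image (· i)).card : ℕ) : ℝ) ≤ w + 2 := by
    intro q i hi
    rw [← Finset.card_image_of_injective _ Fin.val_injective]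
    refine (card_le_add_one_of_sub_le (w := w + 1) (by positivity) ?_).trans_eq (by ring)
    simp only [Finset.mem_image, Finset.mem_filter]
    rintro _ ⟨_, ⟨a, ⟨ha, rfl⟩, rfl⟩, rfl⟩ _ ⟨_, ⟨b, ⟨hb, hQ⟩, rfl⟩, rfl⟩
    have ha' := (Finset.mem_filter.1 hi).2.1
    have hb' := (Finset.mem_filter.1 (hQ ▸ hi : i ∈ Q b)).2.2
    linarith [hs a ha b hb i]
  have card_fiber : ∀ q, ((s.filter (Q · = q)).card : ℝ) ≤
      Fintype.card (ι → Fin n) * ((w + 2) / n) ^ D := by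
    intro q
    rcases (s.filter (Q · = q)).eq_empty_or_nonempty with h | ⟨a, ha⟩
    · rw [h, Finset.card_empty, Nat.cast_zero]
      positivity
    have hDq : D ≤ q.card := (Finset.mem_filter.1 ha).2 ▸ hD a
    refine (card_le_of_card_image_eval_le _ q (card_values q)).trans ?_
    rw [Fintype.card_fin]
    gcongr ?_ * ?_
    exact pow_le_pow_of_le_one (by positivity) hwn hDq
  refine (card_le_of_forall_fiber_le s Q card_fiber).trans_eq ?_
  rw [Fintype.card_finset, Nat.cast_pow, Nat.cast_ofNat]
  ring

end Counting

section Sample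

variable {X : Type*} [PseudoMetricSpace X] {T : X → X}

theorem IsFinOpenCover.exists_lipschitzWith_bumps [CompactSpace X] {α : Finset (Set X)}
    (hα : IsFinOpenCover α) :
    ∃ (L : NNReal) (f : Set X → X → ℝ), 0 < L ∧ (∀ A, LipschitzWith L (f A)) ∧
      (∀ A x, 0 < f A x → x ∈ A) ∧ ∀ x, ∃ A ∈ α, 1 ≤ f A x := by
  obtain ⟨δ, hδ, hball⟩ := lebesgue_number_lemma_of_metric_sUnion (c := (α : Set (Set X)))
    isCompact_univ hα.1 hα.2.ge
  refine ⟨δ.toNNReal⁻¹, fun A x => thickenedIndicator hδ {y | Metric.ball y δ ⊆ A} x,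
    by simpa, fun A => ?_, fun A x hx => ?_, fun x => ?_⟩
  · exact lipschitzWith_thickenedIndicator hδ _
  · by_contra hxA
    refine hx.ne' (congrArg NNReal.toReal (thickenedIndicator_zero hδ _ fun hmem => hxA ?_))
    obtain ⟨y, hy, hxy⟩ := Metric.mem_thickening_iff.1 hmem
    exact hy hxy
  · obtain ⟨A, hA, hxA⟩ := hball x (mem_univ x)
    exact ⟨A, hA, (congrArg NNReal.toReal (thickenedIndicator_one hδ _ hxA)).ge⟩

theorem IsFinOpenCover.exists_spread_family [CompactSpace X] [Nonempty X] (hT : Continuous T)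
    {α : Finset (Set X)} (hα : IsFinOpenCover α) :
    ∃ L : ℝ, 0 < L ∧ ∀ n : ℕ, 0 < n → ∃ (p : ℕ) (x : Fin p → X), 0 < p ∧
      ∀ r, 0 ≤ r → L * r + 2 / n ≤ 1 → ∀ s : Finset (Fin p),
        (∀ a ∈ s, ∀ b ∈ s, bowenDist T n (x a) (x b) ≤ r) →
        (s.card : ℝ) ≤ p * (2 ^ (α.card * n) * (L * r + 2 / n) ^ Dcover (joinN T α n)) := by
  classical
  obtain ⟨L, f, hL, hLip, hf_mem, hf_one⟩ := hα.exists_lipschitzWith_bumps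
  refine ⟨L, by exact_mod_cast hL, fun n hn => ?_⟩
  have : (0 : ℝ) < n := by exact_mod_cast hn
  have : Nonempty (Fin n) := ⟨⟨0, hn⟩⟩
  choose x hx using exists_Dcover_joinN_le_card hT (fun A _ => (hLip A).continuous)
    (fun A _ => hf_mem A) hf_one (n := n) (M := n)
  set e := Fintype.equivFin (α × Fin n → Fin n)
  refine ⟨Fintype.card (α × Fin n → Fin n), x ∘ e.symm, Fintype.card_pos, fun r hr hLr s hs => ?_⟩
  have hdiv : (n * (L * r) + 2) / n = L * r + 2 / n := by field_simp
  have hcard := card_le_of_sub_mem_Ioo hn (fun a i => n * f i.1 (T^[i.2] (x a))) hx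
    (w := n * (L * r)) (by positivity) (hdiv.trans_le hLr) (s.map e.symm.toEmbedding) ?_
  · simpa [hdiv] using hcard
  simp only [Finset.mem_map_equiv, Equiv.symm_symm]
  intro a ha b hb i
  have hdist : dist (T^[i.2] (x a)) (T^[i.2] (x b)) ≤ r :=
    (bowenDist_le_iff hr).1 (by simpa using hs _ ha _ hb) i.2 i.2.2
  rw [← mul_sub]
  gcongr
  calc f i.1 (T^[i.2] (x a)) - f i.1 (T^[i.2] (x b))
      ≤ dist (f i.1 (T^[i.2] (x a))) (f i.1 (T^[i.2] (x b))) := le_abs_self _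
    _ ≤ L * dist (T^[i.2] (x a)) (T^[i.2] (x b)) := (hLip i.1).dist_le_mul _ _
    _ ≤ L * r := by gcongr

end Sample

/-! ### Code lengths and phase averaging -/

section Gibbs

variable {ι W A : Type*} [Fintype ι] [Fintype W] [Fintype A]

theorem card_mul_neg_log_le_sum [DecidableEq W] {len : W → ℝ}
    (hlen : ∑ v, Real.exp (-len v) ≤ 1) (w : ι → W) {η : ℝ} (hη : 0 < η)
    (hw : ∀ v, ((Finset.univ.filter (w · = v)).card : ℝ) ≤ Fintype.card ι * η) :
    Fintype.card ι * -Real.log η ≤ ∑ a, len (w a) := by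
  have hpoint : ∀ a, -Real.log η - len (w a) + 1 ≤ Real.exp (-len (w a)) / η := fun a => by
    calc _ ≤ Real.exp (-Real.log η - len (w a)) := Real.add_one_le_exp _
      _ = Real.exp (-len (w a)) / η := by
        rw [sub_eq_add_neg, add_comm, Real.exp_add, Real.exp_neg (Real.log η), Real.exp_log hη,
          div_eq_mul_inv]
  have hkraft : ∑ a, Real.exp (-len (w a)) / η ≤ Fintype.card ι := by
    rw [← Finset.sum_div, div_le_iff₀ hη]
    calc ∑ a, Real.exp (-len (w a))
        = ∑ v, ((Finset.univ.filter (w · = v)).card : ℝ) * Real.exp (-len v) := by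
          rw [← Finset.sum_fiberwise' Finset.univ w fun v => Real.exp (-len v)]
          simp only [Finset.sum_const, nsmul_eq_mul]
      _ ≤ ∑ v, Fintype.card ι * η * Real.exp (-len v) := by gcongr with v; exact hw v
      _ = Fintype.card ι * η * ∑ v, Real.exp (-len v) := by rw [Finset.mul_sum]
      _ ≤ Fintype.card ι * η := mul_le_of_le_one_right (by positivity) hlen
  have hsum := (Finset.sum_le_sum fun a (_ : a ∈ Finset.univ) => hpoint a).trans hkraft
  simp only [Finset.sum_add_distrib, Finset.sum_sub_distrib, Finset.sum_const, Finset.card_univ,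
    nsmul_eq_mul, mul_one] at hsum
  linarith

theorem sum_exp_neg_prod_le_one {len : A → ℝ} (hlen : ∑ v, Real.exp (-len v) ≤ 1) (l : ℕ) :
    ∑ v : A × (Fin l → A), Real.exp (-(len v.1 + ∑ k, len (v.2 k))) ≤ 1 := by
  have hnonneg : 0 ≤ ∑ v, Real.exp (-len v) := Finset.sum_nonneg fun v _ => (Real.exp_pos _).le
  calc ∑ v : A × (Fin l → A), Real.exp (-(len v.1 + ∑ k, len (v.2 k)))
      = (∑ v, Real.exp (-len v)) * (∑ v, Real.exp (-len v)) ^ l := by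
        simp only [neg_add, Real.exp_add, ← Finset.sum_neg_distrib, Real.exp_sum]
        rw [Fintype.sum_prod_type, Fintype.sum_pow, Finset.sum_mul_sum]
    _ ≤ 1 := mul_le_one₀ hlen (pow_nonneg hnonneg _) (pow_le_one₀ hnonneg hlen)

theorem sum_range_mul_eq_sum_add_mul {M : Type*} [AddCommMonoid M] (f : ℕ → M) (m l : ℕ) :
    ∑ j ∈ Finset.range (m * l), f j =
      ∑ s ∈ Finset.range m, ∑ k ∈ Finset.range l, f (s + k * m) := by
  induction l with
  | zero => simp
  | succ l ih =>
    simp only [Finset.sum_range_succ, Finset.sum_add_distrib, ← ih]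
    rw [Nat.mul_succ, Finset.sum_range_add]
    simp only [mul_comm m l, add_comm]

end Gibbs

section PhaseAveraging

variable {X : Type*} [PseudoMetricSpace X] {T : X → X} {r : ℝ}

theorem bowenDist_mul_le_of_blocks (hr : 0 ≤ r) {m l s : ℕ} (hs : s < m) {x y : X}
    (hinit : bowenDist T m x y ≤ r)
    (hblock : ∀ k < l, bowenDist T m (T^[s + k * m] x) (T^[s + k * m] y) ≤ r) :
    bowenDist T (m * l) x y ≤ r := by
  rw [bowenDist_le_iff hr] at hinit ⊢
  intro j hj
  by_cases hjs : j < s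
  · exact hinit j (hjs.trans hs)
  have hm : 0 < m := by omega
  have hk : (j - s) / m < l := by rw [Nat.div_lt_iff_lt_mul hm, mul_comm]; omega
  have hdist := (bowenDist_le_iff hr).1 (hblock _ hk) _ (Nat.mod_lt (j - s) hm)
  have hj_eq : (j - s) % m + (s + (j - s) / m * m) = j := by
    have := Nat.mod_add_div' (j - s) m
    omega
  simpa only [← Function.iterate_add_apply, hj_eq] using hdist

variable {ι A : Type*} [Fintype ι] [Fintype A] {code : X → A} {len : A → ℝ} {m l : ℕ}

theorem card_mul_neg_log_le_sum_phase (hlen : ∑ v, Real.exp (-len v) ≤ 1) (hr : 0 ≤ r)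
    (hcode : ∀ x y, code x = code y → bowenDist T m x y ≤ r) {x : ι → X} {η : ℝ} (hη : 0 < η)
    (hx : ∀ s : Finset ι, (∀ a ∈ s, ∀ b ∈ s, bowenDist T (m * l) (x a) (x b) ≤ r) →
      (s.card : ℝ) ≤ Fintype.card ι * η) {s : ℕ} (hs : s < m) :
    Fintype.card ι * -Real.log η ≤
      ∑ a, (len (code (x a)) + ∑ k ∈ Finset.range l, len (code (T^[s + k * m] (x a)))) := by
  classical
  simp only [Finset.sum_range]
  refine card_mul_neg_log_le_sum (sum_exp_neg_prod_le_one hlen l)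
    (fun a => (code (x a), fun k : Fin l => code (T^[s + k * m] (x a)))) hη fun v => ?_
  refine hx _ fun a ha b hb => ?_
  have hab := (Finset.mem_filter.1 ha).2.trans (Finset.mem_filter.1 hb).2.symm
  rw [Prod.mk.injEq] at hab
  exact bowenDist_mul_le_of_blocks hr hs (hcode _ _ hab.1)
    fun k hk => hcode _ _ (congrFun hab.2 ⟨k, hk⟩)

/- Concatenating codes at the times `s, s + m, …` gives a code for orbits of length `m * l`;
averaging over the phase `s < m` turns the total length into a sum over all times. -/
theorem mul_card_mul_neg_log_le_sum (hlen : ∑ v, Real.exp (-len v) ≤ 1) (hr : 0 ≤ r)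
    (hcode : ∀ x y, code x = code y → bowenDist T m x y ≤ r) {x : ι → X} {η : ℝ} (hη : 0 < η)
    (hx : ∀ s : Finset ι, (∀ a ∈ s, ∀ b ∈ s, bowenDist T (m * l) (x a) (x b) ≤ r) →
      (s.card : ℝ) ≤ Fintype.card ι * η) :
    m * (Fintype.card ι * -Real.log η) ≤
      m * ∑ a, len (code (x a)) + ∑ j ∈ Finset.range (m * l), ∑ a, len (code (T^[j] (x a))) := by
  have hphase := Finset.sum_le_sum fun s hs =>
    card_mul_neg_log_le_sum_phase hlen hr hcode hη hx (Finset.mem_range.1 hs)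
  rw [sum_range_mul_eq_sum_add_mul]
  simpa [Finset.sum_add_distrib, Finset.sum_comm (s := Finset.univ) (t := Finset.range l)]
    using hphase

end PhaseAveraging

/-! ### Invariant limits of orbit averages -/

section KrylovBogolyubov

variable {X : Type*} [MeasurableSpace X] {T : X → X} {n : ℕ} {σ : Measure X}

/-- The average over the times `0, …, n - 1` of the images of `σ` under the iterates of `T`. -/
def cesaroMeasure (T : X → X) (n : ℕ) (σ : Measure X) : Measure X :=
  (n : ℝ≥0∞)⁻¹ • ∑ j ∈ Finset.range n, σ.map T^[j]

/-- The uniform distribution on a finite family of points, counted with multiplicity. -/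
def familyMeasure {ι : Type*} [Fintype ι] (x : ι → X) : Measure X :=
  (Fintype.card ι : ℝ≥0∞)⁻¹ • ∑ a, Measure.dirac (x a)

theorem isProbabilityMeasure_cesaroMeasure [IsProbabilityMeasure σ] (hT : Measurable T)
    (hn : 0 < n) : IsProbabilityMeasure (cesaroMeasure T n σ) := by
  have hmap : ∀ j, IsProbabilityMeasure (σ.map T^[j]) := fun j =>
    Measure.isProbabilityMeasure_map (hT.iterate j).aemeasurable
  constructor
  simp [cesaroMeasure, ENNReal.inv_mul_cancel (Nat.cast_ne_zero.2 hn.ne')]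

theorem isProbabilityMeasure_familyMeasure {ι : Type*} [Fintype ι] [Nonempty ι] (x : ι → X) :
    IsProbabilityMeasure (familyMeasure x) := by
  constructor
  simp [familyMeasure, ENNReal.inv_mul_cancel]

variable [TopologicalSpace X] [BorelSpace X]

theorem integral_cesaroMeasure [IsFiniteMeasure σ] (hT : Continuous T)
    (Φ : BoundedContinuousFunction X ℝ) :
    ∫ y, Φ y ∂cesaroMeasure T n σ = (n : ℝ)⁻¹ * ∑ j ∈ Finset.range n, ∫ y, Φ (T^[j] y) ∂σ := by
  rw [cesaroMeasure, integral_smul_measure, integral_finsetSum_measure fun _ _ => Φ.integrable _]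
  simp only [ENNReal.toReal_inv, ENNReal.toReal_natCast, smul_eq_mul]
  congr! 2 with j
  exact integral_map (hT.iterate j).measurable.aemeasurable Φ.continuous.aestronglyMeasurable

theorem integral_familyMeasure {ι : Type*} [Fintype ι] (x : ι → X)
    (Φ : BoundedContinuousFunction X ℝ) :
    ∫ y, Φ y ∂familyMeasure x = (Fintype.card ι : ℝ)⁻¹ * ∑ a, Φ (x a) := by
  rw [familyMeasure, integral_smul_measure, integral_finsetSum_measure fun _ _ => Φ.integrable _]
  simp [integral_dirac' _ _ Φ.continuous.stronglyMeasurable]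

theorem card_mul_mul_integral_cesaroMeasure_familyMeasure {ι : Type*} [Fintype ι] [Nonempty ι]
    (hT : Continuous T) (n : ℕ) (x : ι → X) (Φ : BoundedContinuousFunction X ℝ) :
    Fintype.card ι * (n * ∫ y, Φ y ∂cesaroMeasure T n (familyMeasure x)) =
      ∑ j ∈ Finset.range n, ∑ a, Φ (T^[j] (x a)) := by
  have := isProbabilityMeasure_familyMeasure x
  have hι : (Fintype.card ι : ℝ) ≠ 0 := Nat.cast_ne_zero.2 Fintype.card_ne_zero
  have hj : ∀ j, Fintype.card ι * ∫ y, Φ (T^[j] y) ∂familyMeasure x = ∑ a, Φ (T^[j] (x a)) :=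
    fun j => by
      rw [← mul_inv_cancel_left₀ hι (∑ a, Φ (T^[j] (x a)))]
      exact congrArg _ (integral_familyMeasure x (Φ.compContinuous ⟨T^[j], hT.iterate j⟩))
  rcases n.eq_zero_or_pos with rfl | hn
  · simp
  · rw [integral_cesaroMeasure hT, mul_inv_cancel_left₀ (by positivity), Finset.mul_sum]
    exact Finset.sum_congr rfl fun j _ => hj j

theorem abs_integral_comp_sub_integral_cesaroMeasure_le [IsProbabilityMeasure σ]
    (hT : Continuous T) (Φ : BoundedContinuousFunction X ℝ) :
    |∫ y, Φ (T y) ∂cesaroMeasure T n σ - ∫ y, Φ y ∂cesaroMeasure T n σ| ≤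
      2 * ‖Φ‖ * (n : ℝ)⁻¹ := by
  have hint : ∀ j, ‖∫ y, Φ (T^[j] y) ∂σ‖ ≤ ‖Φ‖ := fun j => by
    simpa using norm_integral_le_of_norm_le_const (μ := σ)
      (ae_of_all _ fun y => Φ.norm_coe_le_norm (T^[j] y))
  have htelescope : ∫ y, Φ (T y) ∂cesaroMeasure T n σ - ∫ y, Φ y ∂cesaroMeasure T n σ =
      (n : ℝ)⁻¹ * (∫ y, Φ (T^[n] y) ∂σ - ∫ y, Φ (T^[0] y) ∂σ) := by
    rw [← Finset.sum_range_sub fun j => ∫ y, Φ (T^[j] y) ∂σ, Finset.sum_sub_distrib, mul_sub,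
      integral_cesaroMeasure hT Φ, ← integral_cesaroMeasure hT Φ,
      integral_cesaroMeasure hT Φ]
    simp only [Function.iterate_succ_apply']
    exact congrArg (· - _) (integral_cesaroMeasure hT (Φ.compContinuous ⟨T, hT⟩))
  rw [htelescope, abs_mul, abs_of_nonneg (by positivity), mul_comm]
  gcongr
  calc _ ≤ ‖∫ y, Φ (T^[n] y) ∂σ‖ + ‖∫ y, Φ (T^[0] y) ∂σ‖ := norm_sub_le _ _
    _ ≤ 2 * ‖Φ‖ := by linarith [hint n, hint 0]

theorem exists_measurePreserving_tendsto_integral {X : Type*} [MetricSpace X] [CompactSpace X]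
    [MeasurableSpace X] [BorelSpace X] {T : X → X} (hT : Continuous T) {n : ℕ → ℕ}
    (hn_pos : ∀ k, 0 < n k) (hn : Tendsto n atTop atTop) (σ : ℕ → Measure X)
    [∀ k, IsProbabilityMeasure (σ k)] :
    ∃ (μ : Measure X) (l : Filter ℕ), IsProbabilityMeasure μ ∧ MeasurePreserving T μ μ ∧
      l.NeBot ∧ l ≤ atTop ∧ ∀ Φ : BoundedContinuousFunction X ℝ,
        Tendsto (fun k => ∫ y, Φ y ∂cesaroMeasure T (n k) (σ k)) l (𝓝 (∫ y, Φ y ∂μ)) := by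
  have hprob := fun k => isProbabilityMeasure_cesaroMeasure (σ := σ k) hT.measurable (hn_pos k)
  set l : Ultrafilter ℕ := Ultrafilter.of atTop
  have hl : (l : Filter ℕ) ≤ atTop := Ultrafilter.of_le _
  obtain ⟨μ, -, hμ⟩ := isCompact_univ.ultrafilter_le_nhds (X := ProbabilityMeasure X)
    (l.map fun k => ⟨cesaroMeasure T (n k) (σ k), hprob k⟩) (by simp)
  have hlim := ProbabilityMeasure.tendsto_iff_forall_integral_tendsto.1 hμ
  refine ⟨μ, l, inferInstance, ⟨hT.measurable, ?_⟩, inferInstance, hl, hlim⟩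
  have : IsProbabilityMeasure (Measure.map T (μ : Measure X)) :=
    Measure.isProbabilityMeasure_map hT.measurable.aemeasurable
  refine ext_of_forall_integral_eq_of_IsFiniteMeasure fun Φ => ?_
  rw [integral_map hT.measurable.aemeasurable Φ.continuous.aestronglyMeasurable]
  have hbound : Tendsto (fun k => 2 * ‖Φ‖ * (n k : ℝ)⁻¹) l (𝓝 0) := by
    simpa using ((tendsto_inv_atTop_zero.comp
      (tendsto_natCast_atTop_atTop.comp hn)).const_mul (2 * ‖Φ‖)).mono_left hl
  have hsub : Tendsto (fun k => ∫ y, Φ (T y) ∂cesaroMeasure T (n k) (σ k) -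
      ∫ y, Φ y ∂cesaroMeasure T (n k) (σ k)) l (𝓝 0) :=
    squeeze_zero_norm (fun k => abs_integral_comp_sub_integral_cesaroMeasure_le hT Φ) hbound
  exact sub_eq_zero.1
    (tendsto_nhds_unique ((hlim (Φ.compContinuous ⟨T, hT⟩)).sub (hlim Φ)) hsub)

end KrylovBogolyubov

/-! ### Coding by a partition, with continuous code lengths -/

section Partition

variable {X : Type*} [MeasurableSpace X] {μ : Measure X} [IsProbabilityMeasure μ]
  {P : Finset (Set X)}

theorem isFinPartition_joinN {T : X → X} (hT : Measurable T) (hP : IsFinPartition P) (n : ℕ) :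
    IsFinPartition (joinN T P n) := by
  refine ⟨fun S hS => ?_, fun S hS S' hS' hne => ?_, eq_univ_of_forall fun x => ?_⟩
  · obtain ⟨f, hf, rfl⟩ := mem_joinN.1 hS
    exact MeasurableSet.iInter fun j => hT.iterate _ (hP.1 _ (hf j))
  · obtain ⟨f, hf, rfl⟩ := mem_joinN.1 hS
    obtain ⟨g, hg, rfl⟩ := mem_joinN.1 hS'
    obtain ⟨j, hj⟩ : ∃ j, f j ≠ g j := by
      by_contra! h
      exact hne (by simp only [h])
    refine disjoint_left.2 fun x hx hx' => ?_
    exact disjoint_left.1 (hP.2.1 _ (hf j) _ (hg j) hj) (mem_iInter.1 hx j) (mem_iInter.1 hx' j)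
  · choose f hf hx using fun j : Fin n => mem_sUnion.1 (hP.2.2 ▸ mem_univ (T^[(j : ℕ)] x))
    exact ⟨_, mem_joinN.2 ⟨f, hf, rfl⟩, mem_iInter.2 hx⟩

theorem IsFinPartition.sum_measureReal_eq_one (hP : IsFinPartition P) :
    ∑ A ∈ P, μ.real A = 1 := by
  have hcover : ⋃ A ∈ P, A = univ := by
    rw [← hP.2.2, Set.sUnion_eq_biUnion]
    rfl
  rw [← measureReal_biUnion_finset (f := fun A => A) (fun A hA B hB => hP.2.1 A hA B hB) hP.1,
    hcover, probReal_univ]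

theorem entP_eq_ofReal_sum (P : Finset (Set X)) :
    entP μ P = ENNReal.ofReal (∑ A ∈ P, Real.negMulLog (μ.real A)) := by
  rw [ENNReal.ofReal_sum_of_nonneg fun A _ =>
    Real.negMulLog_nonneg measureReal_nonneg measureReal_le_one]
  simp only [entP, Real.negMulLog, Measure.real, neg_mul]

end Partition

theorem bowenDist_le_of_mem_joinN {X : Type*} [PseudoMetricSpace X] [CompactSpace X] {T : X → X}
    {P : Finset (Set X)} {ε : ℝ} (hε : 0 ≤ ε) (hP : ∀ s ∈ P, Metric.diam s ≤ ε) {n : ℕ} {S : Set X}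
    (hS : S ∈ joinN T P n) {x y : X} (hx : x ∈ S) (hy : y ∈ S) : bowenDist T n x y ≤ ε := by
  obtain ⟨f, hf, rfl⟩ := mem_joinN.1 hS
  refine (bowenDist_le_iff hε).2 fun j hj => ?_
  have hxj : T^[j] x ∈ f ⟨j, hj⟩ := mem_iInter.1 hx ⟨j, hj⟩
  have hyj : T^[j] y ∈ f ⟨j, hj⟩ := mem_iInter.1 hy ⟨j, hj⟩
  exact (Metric.dist_le_diam_of_mem Metric.isBounded_of_compactSpace hxj hyj).trans (hP _ (hf _))

theorem exists_bowenDist_lt_of_dist_lt {X : Type*} [PseudoMetricSpace X] [CompactSpace X]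
    {T : X → X} (hT : Continuous T) (n : ℕ) {ε : ℝ} (hε : 0 < ε) :
    ∃ ρ : ℝ, 0 < ρ ∧ ∀ x y, dist x y < ρ → bowenDist T n x y < ε := by
  have key : ∀ᶠ ρ in 𝓝[>] (0 : ℝ), ∀ j ∈ Finset.range n, ∀ x y, dist x y < ρ →
      dist (T^[j] x) (T^[j] y) < ε := by
    refine (Filter.eventually_all_finset _).2 fun j _ => ?_
    obtain ⟨δ, hδ, h⟩ := Metric.uniformContinuous_iff.1
      (CompactSpace.uniformContinuous_of_continuous (hT.iterate j)) ε hε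
    filter_upwards [Ioo_mem_nhdsGT hδ] with ρ hρ x y hxy using h (hxy.trans hρ.2)
  obtain ⟨ρ, hρ, hρ0⟩ := (key.and self_mem_nhdsWithin).exists
  exact ⟨ρ, hρ0, fun x y hxy =>
    (bowenDist_lt_iff hε).2 fun j hj => hρ j (Finset.mem_range.2 hj) x y hxy⟩

section Bumps

variable {X β : Type*} [MetricSpace X] [Finite β]

theorem exists_pairwise_disjoint_thickening [CompactSpace X] {K : β → Set X}
    (hK : ∀ b, IsClosed (K b)) (hdisj : Pairwise (Function.onFun Disjoint K)) {ρ : ℝ} (hρ : 0 < ρ) :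
    ∃ r ∈ Ioo 0 ρ, Pairwise (Function.onFun Disjoint fun b => Metric.thickening r (K b)) := by
  have key : ∀ᶠ r in 𝓝[>] (0 : ℝ), ∀ b b', b ≠ b' →
      Disjoint (Metric.thickening r (K b)) (Metric.thickening r (K b')) := by
    refine Filter.eventually_all.2 fun b => Filter.eventually_all.2 fun b' => ?_
    rcases eq_or_ne b b' with rfl | hne
    · exact Filter.Eventually.of_forall fun _ h => absurd rfl h
    · obtain ⟨r, hr, hdis⟩ := (hdisj hne).exists_thickenings (hK b).isCompact (hK b')
      filter_upwards [Ioo_mem_nhdsGT hr] with s hs _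
      exact hdis.mono (Metric.thickening_mono hs.2.le _) (Metric.thickening_mono hs.2.le _)
  obtain ⟨r, hr, hrρ⟩ := (key.and (Ioo_mem_nhdsGT hρ)).exists
  exact ⟨r, hrρ, hr⟩

theorem measureReal_le_integral_thickenedIndicator [MeasurableSpace X] [BorelSpace X]
    (μ : Measure X) [IsFiniteMeasure μ] {K : Set X} (hK : MeasurableSet K) {r : ℝ} (hr : 0 < r) :
    μ.real K ≤ ∫ x, (thickenedIndicator hr K x : ℝ) ∂μ := by
  rw [← BoundedContinuousFunction.toReal_lintegral_coe_eq_integral]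
  exact ENNReal.toReal_mono (BoundedContinuousFunction.lintegral_lt_top_of_nnreal μ _).ne
    (measure_le_lintegral_thickenedIndicator μ hK hr)

theorem exists_disjoint_bumps [CompactSpace X] [MeasurableSpace X] [BorelSpace X]
    (μ : Measure X) [IsFiniteMeasure μ] {B : β → Set X} (hB : ∀ b, MeasurableSet (B b))
    (hdisj : Pairwise (Function.onFun Disjoint B)) {ρ δ : ℝ} (hρ : 0 < ρ) (hδ : 0 < δ) :
    ∃ φ : β → BoundedContinuousFunction X ℝ, (∀ b x, φ b x ≤ 1) ∧
      (∀ b x, φ b x ≠ 0 → ∃ y ∈ B b, dist x y < ρ) ∧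
      (∀ b b' x, φ b x ≠ 0 → φ b' x ≠ 0 → b = b') ∧
      ∀ b, μ.real (B b) - δ ≤ ∫ x, φ b x ∂μ := by
  choose K hKB hK hKδ using fun b => (hB b).exists_isClosed_sdiff_lt
    (measure_ne_top μ (B b)) (ENNReal.ofReal_pos.2 hδ).ne'
  obtain ⟨r, hr, hthick⟩ := exists_pairwise_disjoint_thickening hK
    (fun b b' hne => (hdisj hne).mono (hKB b) (hKB b')) hρ
  let φ : β → BoundedContinuousFunction X ℝ := fun b =>
    BoundedContinuousFunction.comp NNReal.toReal (LipschitzWith.subtype_val _)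
      (thickenedIndicator hr.1 (K b))
  have hmem : ∀ b x, φ b x ≠ 0 → x ∈ Metric.thickening r (K b) := fun b x h => by
    by_contra hx
    exact h (NNReal.coe_eq_zero.2 (thickenedIndicator_zero hr.1 _ hx))
  refine ⟨φ, fun b x => NNReal.coe_le_one.2 (thickenedIndicator_le_one hr.1 _ x),
    fun b x h => ?_, fun b b' x h h' => ?_, fun b => ?_⟩
  · obtain ⟨y, hy, hxy⟩ := Metric.mem_thickening_iff.1 (hmem b x h)
    exact ⟨y, hKB b hy, hxy.trans hr.2⟩
  · by_contra hne
    exact disjoint_left.1 (hthick hne) (hmem b x h) (hmem b' x h')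
  · have hdiff : μ.real (B b \ K b) ≤ δ :=
      ENNReal.toReal_le_of_le_ofReal hδ.le (hKδ b).le
    have hsplit := measureReal_sdiff_add_inter (μ := μ) (s := B b) (hK b).measurableSet
    rw [inter_eq_self_of_subset_right (hKB b)] at hsplit
    have hint : μ.real (K b) ≤ ∫ x, φ b x ∂μ :=
      measureReal_le_integral_thickenedIndicator μ (hK b).measurableSet hr.1
    linarith

end Bumps

section Code

variable {X β τ : Type*} [TopologicalSpace X]

/-- Lengths of a code with two kinds of words: those carrying a weight `p b`, coded optimally up to
one flag, and escape words, all of length `C`. -/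
def codeLen (p : β → ℝ) (C : ℝ) : β ⊕ τ → ℝ :=
  Sum.elim (fun b => Real.log 2 - Real.log (p b)) fun _ => C

/-- The code of a point: a bump which does not vanish there, or the escape word `cls x` if there is
none. -/
def bumpCode (φ : β → BoundedContinuousFunction X ℝ) (cls : X → τ) (x : X) : β ⊕ τ :=
  open Classical in if h : ∃ b, φ b x ≠ 0 then Sum.inl h.choose else Sum.inr (cls x)

/-- A continuous function dominating the code lengths `codeLen p C (bumpCode φ cls x)`. -/
def codeMajorant [Fintype β] (p : β → ℝ) (C : ℝ) (φ : β → BoundedContinuousFunction X ℝ) :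
    BoundedContinuousFunction X ℝ :=
  BoundedContinuousFunction.const X C - ∑ b, (C - (Real.log 2 - Real.log (p b))) • φ b

variable {p : β → ℝ} {C : ℝ} {φ : β → BoundedContinuousFunction X ℝ} {cls : X → τ} {x : X}

theorem sum_exp_neg_codeLen_le_one [Fintype β] [Fintype τ] [Nonempty τ] (hp : ∀ b, 0 < p b)
    (hsum : ∑ b, p b ≤ 1) (hC : Real.log (2 * Fintype.card τ) ≤ C) :
    ∑ v : β ⊕ τ, Real.exp (-codeLen p C v) ≤ 1 := by
  have : (0 : ℝ) < Fintype.card τ := Nat.cast_pos.2 Fintype.card_pos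
  have hword : ∀ b, Real.exp (-(Real.log 2 - Real.log (p b))) = p b / 2 := fun b => by
    rw [neg_sub, Real.exp_sub, Real.exp_log (hp b), Real.exp_log two_pos]
  have hescape : Fintype.card τ * Real.exp (-C) ≤ 1 / 2 := by
    have h := Real.exp_le_exp.2 (neg_le_neg hC)
    rw [Real.exp_neg (Real.log _), Real.exp_log (by positivity)] at h
    calc (Fintype.card τ : ℝ) * Real.exp (-C)
        ≤ Fintype.card τ * (2 * Fintype.card τ : ℝ)⁻¹ := by gcongr
      _ = 1 / 2 := by field_simp
  simp only [Fintype.sum_sum_type, codeLen, Sum.elim_inl, Sum.elim_inr, hword, Finset.sum_const,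
    Finset.card_univ, nsmul_eq_mul, ← Finset.sum_div]
  linarith

theorem apply_ne_zero_of_bumpCode_eq_inl {b : β} (h : bumpCode φ cls x = Sum.inl b) :
    φ b x ≠ 0 := by
  unfold bumpCode at h
  split_ifs at h with hx
  exact Sum.inl_injective h ▸ hx.choose_spec

theorem of_bumpCode_eq_inr {t : τ} (h : bumpCode φ cls x = Sum.inr t) :
    (∀ b, φ b x = 0) ∧ cls x = t := by
  unfold bumpCode at h
  split_ifs at h with hx
  exact ⟨fun b => not_not.1 (not_exists.1 hx b), Sum.inr_injective h⟩

variable [Fintype β]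

theorem codeMajorant_apply :
    codeMajorant p C φ x = C - ∑ b, (C - (Real.log 2 - Real.log (p b))) * φ b x := by
  simp [codeMajorant]

theorem codeLen_bumpCode_le_codeMajorant (hφ : ∀ b x, φ b x ≤ 1)
    (hdisj : ∀ b b' x, φ b x ≠ 0 → φ b' x ≠ 0 → b = b')
    (hC : ∀ b, Real.log 2 - Real.log (p b) ≤ C) (cls : X → τ) (x : X) :
    codeLen p C (bumpCode φ cls x) ≤ codeMajorant p C φ x := by
  rw [codeMajorant_apply]
  rcases h : bumpCode φ cls x with b | t
  · have hb := apply_ne_zero_of_bumpCode_eq_inl h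
    have hzero : ∀ b', b' ≠ b → φ b' x = 0 := fun b' hne =>
      not_not.1 fun h' => hne (hdisj _ _ x h' hb)
    rw [Fintype.sum_eq_single b fun b' hne => by rw [hzero b' hne, mul_zero], codeLen, Sum.elim_inl]
    nlinarith [hφ b x, hC b]
  · simp only [codeLen, Sum.elim_inr, (of_bumpCode_eq_inr h).1, mul_zero, Finset.sum_const_zero,
      sub_zero, le_refl]

theorem integral_codeMajorant_le [MeasurableSpace X] [OpensMeasurableSpace X] {μ : Measure X}
    [IsProbabilityMeasure μ] {δ : ℝ} (hsum : ∑ b, p b = 1) (hφ : ∀ b, p b - δ ≤ ∫ x, φ b x ∂μ)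
    (hC : ∀ b, Real.log 2 - Real.log (p b) ≤ C) :
    ∫ x, codeMajorant p C φ x ∂μ ≤ ∑ b, Real.negMulLog (p b) + Real.log 2 +
      δ * ∑ b, (C - (Real.log 2 - Real.log (p b))) := by
  have hint : ∫ x, codeMajorant p C φ x ∂μ =
      C - ∑ b, (C - (Real.log 2 - Real.log (p b))) * ∫ x, φ b x ∂μ := by
    simp only [codeMajorant_apply]
    rw [integral_sub (integrable_const _)
      (integrable_finsetSum _ fun b _ => ((φ b).integrable μ).const_mul _),
      integral_finsetSum _ fun b _ => ((φ b).integrable μ).const_mul _]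
    simp only [integral_const, probReal_univ, one_smul, integral_const_mul]
  have hexpand : ∑ b, (C - (Real.log 2 - Real.log (p b))) * (p b - δ) =
      (C - Real.log 2) * ∑ b, p b - ∑ b, Real.negMulLog (p b) -
        δ * ∑ b, (C - (Real.log 2 - Real.log (p b))) := by
    simp only [Finset.mul_sum, ← Finset.sum_sub_distrib, Real.negMulLog]
    exact Finset.sum_congr rfl fun b _ => by ring
  have hle : ∑ b, (C - (Real.log 2 - Real.log (p b))) * (p b - δ) ≤
      ∑ b, (C - (Real.log 2 - Real.log (p b))) * ∫ x, φ b x ∂μ :=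
    Finset.sum_le_sum fun b _ => mul_le_mul_of_nonneg_left (hφ b) (sub_nonneg.2 (hC b))
  rw [hint]
  rw [hexpand, hsum] at hle
  linarith

end Code

theorem exists_spanning_finset {X : Type*} [PseudoMetricSpace X] [CompactSpace X] {T : X → X}
    (hT : Continuous T) (n : ℕ) {ε : ℝ} (hε : 0 < ε) :
    ∃ E : Finset X, ∀ x, ∃ y ∈ E, bowenDist T n x y < ε := by
  obtain ⟨ρ, hρ, hclose⟩ := exists_bowenDist_lt_of_dist_lt hT n hε
  obtain ⟨E, -, hfin, hE⟩ := finite_cover_balls_of_compact (isCompact_univ (X := X)) hρ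
  refine ⟨hfin.toFinset, fun x => ?_⟩
  obtain ⟨y, hy, hxy⟩ := mem_iUnion₂.1 (hE (mem_univ x))
  exact ⟨y, hfin.mem_toFinset.2 hy, hclose x y hxy⟩

section ExistsCode

universe u

variable {X : Type u} [MetricSpace X] {T : X → X} {m : ℕ} {ε δ : ℝ}

theorem bowenDist_le_of_bumpCode_eq {β τ : Type*} {φ : β → BoundedContinuousFunction X ℝ}
    {B : β → Set X} (hφ : ∀ b x, φ b x ≠ 0 → ∃ y ∈ B b, bowenDist T m x y ≤ ε / 2)
    (hB : ∀ b, ∀ x ∈ B b, ∀ y ∈ B b, bowenDist T m x y ≤ ε) {cls : X → τ} {center : τ → X}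
    (hcls : ∀ x, bowenDist T m x (center (cls x)) ≤ ε) {x y : X}
    (hxy : bumpCode φ cls x = bumpCode φ cls y) : bowenDist T m x y ≤ 2 * ε := by
  rcases hx : bumpCode φ cls x with b | t
  · obtain ⟨x', hx', hxx'⟩ := hφ b x (apply_ne_zero_of_bumpCode_eq_inl hx)
    obtain ⟨y', hy', hyy'⟩ := hφ b y (apply_ne_zero_of_bumpCode_eq_inl (hxy.symm.trans hx))
    rw [bowenDist_comm] at hyy'
    have h₁ := bowenDist_triangle (T := T) (n := m) (x := x) (y := x') (z := y)
    have h₂ := bowenDist_triangle (T := T) (n := m) (x := x') (y := y') (z := y)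
    linarith [hB b x' hx' y' hy']
  · have hxt := hcls x
    have hyt := hcls y
    rw [(of_bumpCode_eq_inr hx).2] at hxt
    rw [(of_bumpCode_eq_inr (hxy.symm.trans hx)).2, bowenDist_comm] at hyt
    linarith [bowenDist_triangle (T := T) (n := m) (x := x) (y := center t) (z := y)]

variable [CompactSpace X] [MeasurableSpace X] [BorelSpace X] {μ : Measure X}
  [IsProbabilityMeasure μ]

theorem exists_code_of_disjoint (hT : Continuous T) (hε : 0 < ε) (hδ : 0 < δ) {β : Type u}
    [Fintype β] {B : β → Set X} (hmeas : ∀ b, MeasurableSet (B b))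
    (hdisj : Pairwise (Function.onFun Disjoint B)) (hpos : ∀ b, 0 < μ.real (B b))
    (hsum : ∑ b, μ.real (B b) = 1) (hB : ∀ b, ∀ x ∈ B b, ∀ y ∈ B b, bowenDist T m x y ≤ ε) :
    ∃ (A : Type u) (_ : Fintype A) (code : X → A) (len : A → ℝ)
      (Φ : BoundedContinuousFunction X ℝ), ∑ v, Real.exp (-len v) ≤ 1 ∧
      (∀ x y, code x = code y → bowenDist T m x y ≤ 2 * ε) ∧ (∀ x, len (code x) ≤ Φ x) ∧
      ∫ x, Φ x ∂μ ≤ ∑ b, Real.negMulLog (μ.real (B b)) + Real.log 2 + δ := by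
  have : Nonempty X := nonempty_of_isProbabilityMeasure μ
  obtain ⟨E, hE⟩ := exists_spanning_finset hT m hε
  choose center hcenter hdist using hE
  have : Nonempty E := ⟨⟨_, hcenter (Classical.arbitrary X)⟩⟩
  obtain ⟨ρ, hρ, hclose⟩ := exists_bowenDist_lt_of_dist_lt hT m (half_pos hε)
  obtain ⟨C₀, hC₀⟩ := (finite_range fun b => Real.log 2 - Real.log (μ.real (B b))).bddAbove
  let C := max C₀ (Real.log (2 * Fintype.card E))
  have hC : ∀ b, Real.log 2 - Real.log (μ.real (B b)) ≤ C := fun b =>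
    (hC₀ (mem_range_self b)).trans (le_max_left _ _)
  let S := ∑ b, (C - (Real.log 2 - Real.log (μ.real (B b))))
  have hS : 0 ≤ S := Finset.sum_nonneg fun b _ => sub_nonneg.2 (hC b)
  obtain ⟨φ, hφ, hφB, hφdisj, hφint⟩ :=
    exists_disjoint_bumps μ hmeas hdisj hρ (δ := δ / (1 + S)) (by positivity)
  refine ⟨β ⊕ E, inferInstance, bumpCode φ fun x => ⟨center x, hcenter x⟩,
    codeLen (fun b => μ.real (B b)) C, codeMajorant (fun b => μ.real (B b)) C φ,
    sum_exp_neg_codeLen_le_one hpos hsum.le (le_max_right _ _), fun x y => ?_,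
    codeLen_bumpCode_le_codeMajorant hφ hφdisj hC _, ?_⟩
  · refine bowenDist_le_of_bumpCode_eq (fun b x hx => ?_) hB (center := Subtype.val)
      fun x => (hdist x).le
    obtain ⟨y, hy, hxy⟩ := hφB b x hx
    exact ⟨y, hy, (hclose x y hxy).le⟩
  · have hδS : δ / (1 + S) * S ≤ δ := by
      rw [div_mul_eq_mul_div, div_le_iff₀ (by positivity)]
      nlinarith
    linarith [integral_codeMajorant_le hsum hφint hC]

theorem IsFinPartition.exists_code {P : Finset (Set X)} (hP : IsFinPartition P)
    (hT : Continuous T) (hε : 0 < ε) (hδ : 0 < δ)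
    (hPε : ∀ S ∈ P, ∀ x ∈ S, ∀ y ∈ S, bowenDist T m x y ≤ ε) :
    ∃ (A : Type u) (_ : Fintype A) (code : X → A) (len : A → ℝ)
      (Φ : BoundedContinuousFunction X ℝ), ∑ v, Real.exp (-len v) ≤ 1 ∧
      (∀ x y, code x = code y → bowenDist T m x y ≤ 2 * ε) ∧ (∀ x, len (code x) ≤ Φ x) ∧
      ∫ x, Φ x ∂μ ≤ (entP μ P).toReal + Real.log 2 + δ := by
  classical
  let Q := P.filter fun S => μ.real S ≠ 0
  have hQP : ∀ b : Q, b.1 ∈ P := fun b => (Finset.mem_filter.1 b.2).1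
  have hsum : ∑ b : Q, μ.real b.1 = 1 := by
    rw [Finset.sum_coe_sort Q fun S => μ.real S, Finset.sum_filter_ne_zero,
      hP.sum_measureReal_eq_one]
  have hent : (entP μ P).toReal = ∑ b : Q, Real.negMulLog (μ.real b.1) := by
    rw [entP_eq_ofReal_sum, ENNReal.toReal_ofReal (Finset.sum_nonneg fun S _ =>
        Real.negMulLog_nonneg measureReal_nonneg measureReal_le_one),
      Finset.sum_coe_sort Q fun S => Real.negMulLog (μ.real S)]
    refine (Finset.sum_filter_of_ne (p := fun S => μ.real S ≠ 0) fun S _ => ?_).symm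
    exact mt fun h0 => by rw [h0, Real.negMulLog_zero]
  rw [hent]
  exact exists_code_of_disjoint hT hε hδ (fun b => hP.1 _ (hQP b))
    (fun b b' hne => hP.2.1 _ (hQP b) _ (hQP b') (Subtype.coe_injective.ne hne))
    (fun b => measureReal_nonneg.lt_of_ne (Finset.mem_filter.1 b.2).2.symm) hsum
    fun b => hPε _ (hQP b)

end ExistsCode

/-! ### Mean dimension as a lower bound -/

theorem mul_sub_le_neg_log_two_pow_mul_pow {a n D : ℕ} {c w u : ℝ} (hD : c * n ≤ D) (hw : 0 < w)
    (hwu : w ≤ u) (hu : u ≤ 1) :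
    n * (c * -Real.log u - a * Real.log 2) ≤ -Real.log (2 ^ (a * n) * w ^ D) := by
  rw [Real.log_mul (by positivity) (by positivity), Real.log_pow, Real.log_pow]
  have hlog_u : Real.log u ≤ 0 := Real.log_nonpos (hw.le.trans hwu) hu
  have hmul : (c * n) * -Real.log u ≤ D * -Real.log w :=
    mul_le_mul hD (neg_le_neg (Real.log_le_log hw hwu)) (by linarith) D.cast_nonneg
  push_cast
  linarith

theorem tendsto_ofReal_mul_add_div_ofReal {ι : Type*} {l : Filter ι} {v : ι → ℝ}
    (hv : Tendsto v l atTop) (c K : ℝ) :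
    Tendsto (fun i => ENNReal.ofReal (c * v i + K) / ENNReal.ofReal (v i)) l
      (𝓝 (ENNReal.ofReal c)) := by
  have hlim : Tendsto (fun i => c + K / v i) l (𝓝 c) := by
    simpa using tendsto_const_nhds.add (hv.const_div_atTop K)
  refine (ENNReal.tendsto_ofReal hlim).congr' ?_
  filter_upwards [hv.eventually_gt_atTop 0] with i hi
  rw [← ENNReal.ofReal_div_of_pos hi, add_div, mul_div_cancel_right₀ _ hi.ne']

theorem tendsto_log_one_div_nhdsGT_zero :
    Tendsto (fun ε : ℝ => Real.log (1 / ε)) (𝓝[>] 0) atTop := by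
  simp_rw [one_div]
  exact Real.tendsto_log_atTop.comp tendsto_inv_nhdsGT_zero

theorem ofReal_le_entRate {X : Type*} [MeasurableSpace X] {T : X → X} {μ : Measure X}
    [IsProbabilityMeasure μ] {P : Finset (Set X)} {h C : ℝ}
    (hP : ∀ m : ℕ, 0 < m → m * h ≤ (entP μ (joinN T P m)).toReal + C) :
    ENNReal.ofReal h ≤ entRate T μ P := by
  have hlim := tendsto_ofReal_mul_add_div_ofReal tendsto_natCast_atTop_atTop h (-C)
  rw [← hlim.liminf_eq, entRate]
  refine liminf_le_liminf ?_
  filter_upwards [eventually_gt_atTop 0] with m hm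
  rw [ENNReal.ofReal_natCast]
  gcongr
  refine ENNReal.ofReal_le_of_le_toReal ?_
  linarith [hP m hm]

theorem Dcover_of_isEmpty {X : Type*} [TopologicalSpace X] [IsEmpty X] (α : Finset (Set X)) :
    Dcover α = 0 :=
  Nat.sInf_eq_zero.2 <| .inl ⟨∅, ⟨by simp, Subsingleton.elim _ _⟩, by simp, by simp [ordCover]⟩

section FiniteOrbit

variable {X A ι : Type*} [PseudoMetricSpace X] [MeasurableSpace X] [BorelSpace X] [Fintype A]
  [Fintype ι] [Nonempty ι] {T : X → X} {code : X → A} {len : A → ℝ}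
  {Φ : BoundedContinuousFunction X ℝ} {m n : ℕ} {r : ℝ} {x : ι → X}

theorem mul_neg_log_le_integral_cesaroMeasure (hT : Continuous T)
    (hlen : ∑ v, Real.exp (-len v) ≤ 1) (hr : 0 ≤ r)
    (hcode : ∀ x y, code x = code y → bowenDist T m x y ≤ r) (hΦ : ∀ x, len (code x) ≤ Φ x)
    (hmn : m ∣ n) {η : ℝ} (hη : 0 < η)
    (hx : ∀ s : Finset ι, (∀ a ∈ s, ∀ b ∈ s, bowenDist T n (x a) (x b) ≤ r) →
      (s.card : ℝ) ≤ Fintype.card ι * η) :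
    m * -Real.log η ≤ m * ‖Φ‖ + n * ∫ y, Φ y ∂cesaroMeasure T n (familyMeasure x) := by
  obtain ⟨l, rfl⟩ := hmn
  have hp : (0 : ℝ) < Fintype.card ι := Nat.cast_pos.2 Fintype.card_pos
  have hnorm : m * ∑ a, len (code (x a)) ≤ m * (Fintype.card ι * ‖Φ‖) := by
    gcongr
    simpa using Finset.sum_le_card_nsmul Finset.univ (fun a => len (code (x a))) ‖Φ‖
      fun a _ => (hΦ _).trans ((le_abs_self _).trans (Φ.norm_coe_le_norm _))
  have horbit : ∑ j ∈ Finset.range (m * l), ∑ a, len (code (T^[j] (x a))) ≤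
      ∑ j ∈ Finset.range (m * l), ∑ a, Φ (T^[j] (x a)) :=
    Finset.sum_le_sum fun j _ => Finset.sum_le_sum fun a _ => hΦ _
  rw [← card_mul_mul_integral_cesaroMeasure_familyMeasure hT] at horbit
  have hcount := mul_card_mul_neg_log_le_sum hlen hr hcode hη hx
  refine le_of_mul_le_mul_left ?_ hp
  linarith

theorem mul_sub_le_integral_cesaroMeasure (hT : Continuous T)
    (hlen : ∑ v, Real.exp (-len v) ≤ 1) (hr : 0 ≤ r)
    (hcode : ∀ x y, code x = code y → bowenDist T m x y ≤ r) (hΦ : ∀ x, len (code x) ≤ Φ x)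
    (hmn : m ∣ n) (hn : 0 < n) {a D : ℕ} {c w u : ℝ} (hD : c * n ≤ D) (hw : 0 < w) (hwu : w ≤ u)
    (hu : u ≤ 1)
    (hx : ∀ s : Finset ι, (∀ a ∈ s, ∀ b ∈ s, bowenDist T n (x a) (x b) ≤ r) →
      (s.card : ℝ) ≤ Fintype.card ι * (2 ^ (a * n) * w ^ D)) :
    m * (c * -Real.log u - a * Real.log 2) ≤
      m * ‖Φ‖ * (n : ℝ)⁻¹ + ∫ y, Φ y ∂cesaroMeasure T n (familyMeasure x) := by
  have hn' : (0 : ℝ) < n := Nat.cast_pos.2 hn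
  have hη := mul_sub_le_neg_log_two_pow_mul_pow (a := a) hD hw hwu hu
  have hcount := mul_neg_log_le_integral_cesaroMeasure hT hlen hr hcode hΦ hmn (by positivity) hx
  rw [← div_eq_mul_inv, div_add' _ _ _ hn'.ne', le_div_iff₀ hn']
  linarith [mul_le_mul_of_nonneg_left hη m.cast_nonneg]

end FiniteOrbit

theorem mul_sub_le_integral_of_tendsto {X A : Type*} [PseudoMetricSpace X] [MeasurableSpace X]
    [BorelSpace X] [Fintype A] {T : X → X} {code : X → A} {len : A → ℝ}
    {Φ : BoundedContinuousFunction X ℝ} {m : ℕ} {r : ℝ} (hT : Continuous T)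
    (hlen : ∑ v, Real.exp (-len v) ≤ 1) (hr : 0 < r)
    (hcode : ∀ x y, code x = code y → bowenDist T m x y ≤ r) (hΦ : ∀ x, len (code x) ≤ Φ x)
    {ι : ℕ → Type*} [∀ k, Fintype (ι k)] [∀ k, Nonempty (ι k)] {x : ∀ k, ι k → X} {n D : ℕ → ℕ}
    {a : ℕ} {c L : ℝ} (hL : 0 < L) (hn : Tendsto n atTop atTop) (hn_pos : ∀ k, 0 < n k)
    (hmn : ∀ᶠ k in atTop, m ∣ n k) (hD : ∀ k, c * n k ≤ D k)
    (hx : ∀ k, ∀ s : Finset (ι k), L * r + 2 / n k ≤ 1 →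
      (∀ a ∈ s, ∀ b ∈ s, bowenDist T (n k) (x k a) (x k b) ≤ r) →
      (s.card : ℝ) ≤ Fintype.card (ι k) * (2 ^ (a * n k) * (L * r + 2 / n k) ^ D k))
    {μ : Measure X} {l : Filter ℕ} [l.NeBot] (hl : l ≤ atTop)
    (hlim : Tendsto (fun k => ∫ y, Φ y ∂cesaroMeasure T (n k) (familyMeasure (x k))) l
      (𝓝 (∫ y, Φ y ∂μ))) (hLr : 2 * (L * r) ≤ 1) :
    m * (c * -Real.log (2 * (L * r)) - a * Real.log 2) ≤ ∫ y, Φ y ∂μ := by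
  have hinv : Tendsto (fun k => (n k : ℝ)⁻¹) atTop (𝓝 0) :=
    tendsto_inv_atTop_zero.comp (tendsto_natCast_atTop_atTop.comp hn)
  have hsmall : ∀ᶠ k in atTop, 2 / (n k : ℝ) ≤ L * r := by
    have h := (hinv.const_mul 2).eventually_le_const (u := L * r) (by rw [mul_zero]; positivity)
    simpa only [div_eq_mul_inv] using h
  have hfinite : ∀ᶠ k in atTop, m * (c * -Real.log (2 * (L * r)) - a * Real.log 2) ≤
      m * ‖Φ‖ * (n k : ℝ)⁻¹ + ∫ y, Φ y ∂cesaroMeasure T (n k) (familyMeasure (x k)) := by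
    filter_upwards [hsmall, hmn] with k hk hmk
    exact mul_sub_le_integral_cesaroMeasure hT hlen hr.le hcode hΦ hmk (hn_pos k) (hD k)
      (by have := hn_pos k; positivity) (by linarith) hLr fun s => hx k s (by linarith)
  have hlimit : Tendsto (fun k => m * ‖Φ‖ * (n k : ℝ)⁻¹ +
      ∫ y, Φ y ∂cesaroMeasure T (n k) (familyMeasure (x k))) l (𝓝 (∫ y, Φ y ∂μ)) := by
    simpa using ((hinv.const_mul (m * ‖Φ‖)).mono_left hl).add hlim
  exact ge_of_tendsto hlimit (hl hfinite)

section InvariantMeasures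

variable {X : Type*} [MeasurableSpace X]

/-- The supremum of `F μ` over the `T`-invariant probability measures `μ`. -/
def iSupInvariant (T : X → X) (F : Measure X → ℝ≥0∞) : ℝ≥0∞ :=
  ⨆ (μ : Measure X) (_ : IsProbabilityMeasure μ) (_ : MeasurePreserving T μ μ), F μ

variable {T : X → X}

theorem iSupInvariant_le {F : Measure X → ℝ≥0∞} {c : ℝ≥0∞}
    (h : ∀ μ, IsProbabilityMeasure μ → MeasurePreserving T μ μ → F μ ≤ c) :
    iSupInvariant T F ≤ c :=
  iSup_le fun μ => iSup₂_le (h μ)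

theorem le_iSupInvariant (F : Measure X → ℝ≥0∞) {μ : Measure X} (hμ : IsProbabilityMeasure μ)
    (hT : MeasurePreserving T μ μ) : F μ ≤ iSupInvariant T F :=
  le_iSup_of_le μ (le_iSup₂_of_le hμ hT le_rfl)

end InvariantMeasures

section CompactMetric

variable {X : Type*} [MetricSpace X] [CompactSpace X] [MeasurableSpace X] [BorelSpace X]
  {T : X → X}

theorem exists_measurePreserving_mul_le_entP_joinN [Nonempty X] (hT : Continuous T)
    {α : Finset (Set X)} (hα : IsFinOpenCover α) {c : ℝ}
    (hD : ∀ᶠ n : ℕ in atTop, c * n ≤ Dcover (joinN T α n)) :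
    ∃ (μ : Measure X) (L : ℝ), IsProbabilityMeasure μ ∧ MeasurePreserving T μ μ ∧ 0 < L ∧
      ∀ ε, 0 < ε → L * ε ≤ 1 → ∀ P, IsFinPartition P → (∀ s ∈ P, Metric.diam s ≤ ε) →
        ∀ m : ℕ, 0 < m → m * (c * -Real.log (L * ε) - α.card * Real.log 2) ≤
          (entP μ (joinN T P m)).toReal + (Real.log 2 + 1) := by
  obtain ⟨L, hL, hspread⟩ := hα.exists_spread_family hT
  obtain ⟨k₀, hk₀⟩ := eventually_atTop.1 hD
  /- Every `m` divides the factorials from some point on. -/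
  let n : ℕ → ℕ := fun k => (k + k₀).factorial
  have hn_pos : ∀ k, 0 < n k := fun k => Nat.factorial_pos _
  have hn_le : ∀ k, k + k₀ ≤ n k := fun k => Nat.self_le_factorial _
  have hn : Tendsto n atTop atTop :=
    tendsto_atTop_mono (fun k => (Nat.le_add_right k k₀).trans (hn_le k)) tendsto_id
  have hdvd : ∀ m, 0 < m → ∀ᶠ k in atTop, m ∣ n k := fun m hm =>
    (eventually_ge_atTop m).mono fun k hk => Nat.dvd_factorial hm (by omega)
  choose p x hp hx using fun k => hspread (n k) (hn_pos k)
  have : ∀ k, Nonempty (Fin (p k)) := fun k => ⟨⟨0, hp k⟩⟩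
  have : ∀ k, IsProbabilityMeasure (familyMeasure (x k)) := fun k =>
    isProbabilityMeasure_familyMeasure _
  obtain ⟨μ, l, hμ, hμT, hl, hl_le, hlim⟩ :=
    exists_measurePreserving_tendsto_integral hT hn_pos hn fun k => familyMeasure (x k)
  refine ⟨μ, 4 * L, hμ, hμT, by positivity, fun ε hε hLε P hP hPε m hm => ?_⟩
  obtain ⟨A, _, code, len, Φ, hlen, hcode, hΦ, hint⟩ :=
    (isFinPartition_joinN hT.measurable hP m).exists_code (μ := μ) hT hε one_pos
      fun S hS x hx y hy => bowenDist_le_of_mem_joinN hε.le hPε hS hx hy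
  have hscale : 4 * L * ε = 2 * (L * (2 * ε)) := by ring
  rw [← add_assoc, hscale]
  rw [hscale] at hLε
  exact (mul_sub_le_integral_of_tendsto hT hlen (by positivity) hcode hΦ hL hn hn_pos (hdvd m hm)
    (fun k => hk₀ _ ((Nat.le_add_left _ _).trans (hn_le k)))
    (fun k s hLr hs => by simpa using hx k (2 * ε) (by positivity) hLr s hs) hl_le (hlim Φ)
    hLε).trans hint

theorem exists_measurePreserving_ofReal_le_dimFLower [Nonempty X] (hT : Continuous T)
    {α : Finset (Set X)} (hα : IsFinOpenCover α) {c : ℝ}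
    (hD : ∀ᶠ n : ℕ in atTop, c * n ≤ Dcover (joinN T α n)) :
    ∃ μ : Measure X, IsProbabilityMeasure μ ∧ MeasurePreserving T μ μ ∧
      ENNReal.ofReal c ≤ dimFLower (infEntRate T) μ := by
  obtain ⟨μ, L, hμ, hμT, hL, hent⟩ := exists_measurePreserving_mul_le_entP_joinN hT hα hD
  refine ⟨μ, hμ, hμT, ?_⟩
  have hlim := tendsto_ofReal_mul_add_div_ofReal tendsto_log_one_div_nhdsGT_zero c
    (-(c * Real.log L + α.card * Real.log 2))
  have hLε : ∀ᶠ ε : ℝ in 𝓝[>] 0, L * ε ≤ 1 := by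
    filter_upwards [Ioo_mem_nhdsGT (inv_pos.2 hL)] with ε hε
    exact ((lt_inv_mul_iff₀ hL).1 (by simpa using hε.2)).le
  rw [← hlim.liminf_eq, dimFLower]
  refine liminf_le_liminf ?_
  filter_upwards [hLε, self_mem_nhdsWithin] with ε hLε (hε : 0 < ε)
  gcongr
  refine le_iInf fun P => le_iInf fun hP => le_iInf fun hPε => ?_
  have hlog : c * Real.log (1 / ε) + -(c * Real.log L + α.card * Real.log 2) =
      c * -Real.log (L * ε) - α.card * Real.log 2 := by
    rw [Real.log_mul hL.ne' hε.ne', one_div, Real.log_inv]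
    ring
  exact hlog ▸ ofReal_le_entRate (hent ε hε hLε P hP hPε)

theorem mdimTop_le_iSupInvariant_dimFLower (hT : Continuous T) :
    mdimTop T ≤ iSupInvariant T (dimFLower (infEntRate T)) := by
  cases isEmpty_or_nonempty X
  · simp [mdimTop, Dcover_of_isEmpty]
  refine iSup₂_le fun α hα => ENNReal.le_of_forall_nnreal_lt fun c hc => ?_
  have hD : ∀ᶠ n : ℕ in atTop, (c : ℝ) * n ≤ Dcover (joinN T α n) := by
    filter_upwards [eventually_lt_of_lt_liminf hc, eventually_gt_atTop 0] with n hn hn0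
    exact_mod_cast (ENNReal.le_div_iff_mul_le (.inl (mod_cast hn0.ne')) (by simp)).1 hn.le
  obtain ⟨μ, hμ, hμT, hc_le⟩ := exists_measurePreserving_ofReal_le_dimFLower hT hα hD
  rw [ENNReal.ofReal_coe_nnreal] at hc_le
  exact hc_le.trans (le_iSupInvariant (dimFLower (infEntRate T)) hμ hμT)

end CompactMetric

/-! ### Borel markers -/

section Marker

variable {X : Type*} [MeasurableSpace X] {T : X ≃ᵐ X} {N : ℕ} {S : Set X}

theorem symm_iterate_iterate (T : X ≃ᵐ X) (j : ℕ) (x : X) : T.symm^[j] (T^[j] x) = x :=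
  Function.LeftInverse.iterate T.symm_apply_apply j x

theorem iterate_symm_iterate (T : X ≃ᵐ X) (j : ℕ) (x : X) : T^[j] (T.symm^[j] x) = x :=
  Function.LeftInverse.iterate T.apply_symm_apply j x

/-- No point of `S` returns to `S` within time `N`. -/
def IsSparse (T : X → X) (N : ℕ) (S : Set X) : Prop :=
  ∀ x ∈ S, ∀ j, 1 ≤ j → j ≤ N → T^[j] x ∉ S

/-- The points whose orbit visits `S` at some other time between `-N` and `N`. -/
def nearOrbits (T : X ≃ᵐ X) (N : ℕ) (S : Set X) : Set X :=
  ⋃ j ∈ Finset.Icc 1 N, T^[j] ⁻¹' S ∪ T.symm^[j] ⁻¹' S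

theorem mem_nearOrbits {x : X} :
    x ∈ nearOrbits T N S ↔ ∃ j, (1 ≤ j ∧ j ≤ N) ∧ (T^[j] x ∈ S ∨ T.symm^[j] x ∈ S) := by
  simp only [nearOrbits, mem_iUnion, Finset.mem_Icc, mem_union, mem_preimage, exists_prop]

theorem measurableSet_nearOrbits (hS : MeasurableSet S) : MeasurableSet (nearOrbits T N S) :=
  Finset.measurableSet_biUnion _ fun j _ =>
    (T.measurable.iterate j hS).union (T.symm.measurable.iterate j hS)

theorem IsSparse.union_sdiff_nearOrbits {A : Set X} (hS : IsSparse T N S) (hA : IsSparse T N A) :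
    IsSparse T N (S ∪ A \ nearOrbits T N S) := by
  rintro x (hx | ⟨hx, hxS⟩) j hj hjN (hj' | ⟨hj', hjS⟩)
  · exact hS x hx j hj hjN hj'
  · exact hjS (mem_nearOrbits.2 ⟨j, ⟨hj, hjN⟩, .inr (by rwa [symm_iterate_iterate])⟩)
  · exact hxS (mem_nearOrbits.2 ⟨j, ⟨hj, hjN⟩, .inl hj'⟩)
  · exact hA x hx j hj hjN hj'

/-- The sparse sets obtained by adding as much as possible of `A 0`, `A 1`, … in turn. -/
def greedySparse (T : X ≃ᵐ X) (N : ℕ) (A : ℕ → Set X) : ℕ → Set X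
  | 0 => ∅
  | i + 1 => greedySparse T N A i ∪ A i \ nearOrbits T N (greedySparse T N A i)

section Greedy

variable {A : ℕ → Set X}

theorem monotone_greedySparse : Monotone (greedySparse T N A) :=
  monotone_nat_of_le_succ fun _ => subset_union_left

theorem measurableSet_greedySparse (hA : ∀ i, MeasurableSet (A i)) (i : ℕ) :
    MeasurableSet (greedySparse T N A i) := by
  induction i with
  | zero => exact MeasurableSet.empty
  | succ i ih => exact ih.union ((hA i).diff (measurableSet_nearOrbits ih))

theorem isSparse_greedySparse (hA : ∀ i, IsSparse T N (A i)) (i : ℕ) :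
    IsSparse T N (greedySparse T N A i) := by
  induction i with
  | zero => exact fun x hx => hx.elim
  | succ i ih => exact ih.union_sdiff_nearOrbits (hA i)

theorem isSparse_iUnion_greedySparse (hA : ∀ i, IsSparse T N (A i)) :
    IsSparse T N (⋃ i, greedySparse T N A i) := by
  intro x hx j hj hjN hxj
  obtain ⟨i, hi⟩ := mem_iUnion.1 hx
  obtain ⟨k, hk⟩ := mem_iUnion.1 hxj
  exact isSparse_greedySparse hA (max i k) x (monotone_greedySparse (le_max_left i k) hi) j hj hjN
    (monotone_greedySparse (le_max_right i k) hk)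

theorem exists_iterate_mem_iUnion_greedySparse {i : ℕ} {x : X} (hx : x ∈ A i) :
    ∃ j ≤ N, T^[j] x ∈ ⋃ i, greedySparse T N A i ∨ T.symm^[j] x ∈ ⋃ i, greedySparse T N A i := by
  by_cases hnear : x ∈ nearOrbits T N (greedySparse T N A i)
  · obtain ⟨j, ⟨-, hjN⟩, hj⟩ := mem_nearOrbits.1 hnear
    exact ⟨j, hjN, hj.imp (mem_iUnion_of_mem i) (mem_iUnion_of_mem i)⟩
  · exact ⟨0, N.zero_le, .inl (mem_iUnion_of_mem (i + 1) (.inr ⟨hx, hnear⟩))⟩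

end Greedy

theorem isPeriodicPt_factorial {X : Type*} {f : X → X} {x : X} {N j : ℕ} (hj : 1 ≤ j) (hjN : j ≤ N)
    (hx : f^[j] x = x) : Function.IsPeriodicPt f N.factorial x :=
  Function.IsPeriodicPt.trans_dvd hx (Nat.dvd_factorial hj hjN)

theorem exists_isSparse_cover [TopologicalSpace X] [SecondCountableTopology X] [T1Space X]
    [OpensMeasurableSpace X] {f : X → X} (hf : Measurable f) (N : ℕ) :
    ∃ A : ℕ → Set X, (∀ i, MeasurableSet (A i)) ∧ (∀ i, IsSparse f N (A i)) ∧
      ∀ x, ¬ Function.IsPeriodicPt f N.factorial x → ∃ i, x ∈ A i := by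
  classical
  obtain ⟨B, hB⟩ := countable_iff_exists_subset_range.1
    (TopologicalSpace.countable_countableBasis X)
  refine ⟨fun i => interior (B i) ∩ ⋂ j ∈ Finset.Icc 1 N, f^[j] ⁻¹' (interior (B i))ᶜ,
    fun i => ?_, fun i x hx j hj hjN hxj => ?_, fun x hx => ?_⟩
  · exact isOpen_interior.measurableSet.inter <| Finset.measurableSet_biInter _ fun j _ =>
      hf.iterate j isOpen_interior.measurableSet.compl
  · exact mem_iInter₂.1 hx.2 j (Finset.mem_Icc.2 ⟨hj, hjN⟩) hxj.1
  · have hopen : IsOpen ((Finset.Icc 1 N).image (f^[·] x) : Set X)ᶜ :=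
      (Finset.finite_toSet _).isClosed.isOpen_compl
    have hxmem : x ∈ ((Finset.Icc 1 N).image (f^[·] x) : Set X)ᶜ := fun hmem => by
      obtain ⟨j, hj, hjx⟩ := Finset.mem_image.1 hmem
      exact hx (isPeriodicPt_factorial (Finset.mem_Icc.1 hj).1 (Finset.mem_Icc.1 hj).2 hjx)
    obtain ⟨V, hV, hxV, hVsub⟩ :=
      (TopologicalSpace.isBasis_countableBasis X).exists_subset_of_mem_open hxmem hopen
    obtain ⟨i, rfl⟩ := hB hV
    have hint := (TopologicalSpace.isOpen_of_mem_countableBasis hV).interior_eq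
    refine ⟨i, by rwa [hint], mem_iInter₂.2 fun j hj hjV => hVsub (hint ▸ hjV) ?_⟩
    exact Finset.mem_image_of_mem _ hj

theorem exists_isSparse_marker [TopologicalSpace X] [SecondCountableTopology X] [T1Space X]
    [OpensMeasurableSpace X] (T : X ≃ᵐ X) (N : ℕ) :
    ∃ S, MeasurableSet S ∧ IsSparse T N S ∧
      ∀ x, ¬ Function.IsPeriodicPt T N.factorial x → ∃ k ≤ 2 * N, T.symm^[k] x ∈ S := by
  obtain ⟨A, hA, hsparse, hcover⟩ := exists_isSparse_cover T.measurable N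
  refine ⟨_, .iUnion (measurableSet_greedySparse hA), isSparse_iUnion_greedySparse hsparse,
    fun x hx => ?_⟩
  have hx' : ¬ Function.IsPeriodicPt T N.factorial (T.symm^[N] x) := fun h =>
    hx (iterate_symm_iterate T N x ▸ h.apply_iterate N)
  obtain ⟨i, hi⟩ := hcover _ hx'
  obtain ⟨j, hj, h | h⟩ := exists_iterate_mem_iUnion_greedySparse (T := T) (N := N) hi
  · refine ⟨N - j, by omega, ?_⟩
    have hsplit : T.symm^[N] x = T.symm^[j] (T.symm^[N - j] x) := by
      rw [← Function.iterate_add_apply, Nat.add_sub_cancel' hj]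
    rwa [hsplit, iterate_symm_iterate] at h
  · exact ⟨j + N, by omega, by rwa [Function.iterate_add_apply]⟩

theorem exists_measurable_elapsed (T : X ≃ᵐ X) (hS : MeasurableSet S) :
    ∃ κ : X → ℕ, Measurable κ ∧ ∀ x, (∃ k, T.symm^[k] x ∈ S) →
      T.symm^[κ x] x ∈ S ∧ (∀ k, T.symm^[k] x ∈ S → κ x ≤ k) ∧
        (T x ∈ S ∧ κ (T x) = 0 ∨ κ (T x) = κ x + 1) := by
  classical
  have hex : ∀ x, ∃ k, T.symm^[k] x ∈ S ∨ ∀ i, T.symm^[i] x ∉ S := fun x => by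
    by_cases h : ∃ k, T.symm^[k] x ∈ S
    · exact h.imp fun _ => .inl
    · exact ⟨0, .inr (not_exists.1 h)⟩
  have hfind : ∀ x (hx : ∃ k, T.symm^[k] x ∈ S), Nat.find (hex x) = Nat.find hx := fun x hx =>
    Nat.find_congr' fun {k} => or_iff_left fun h => hx.elim h
  refine ⟨fun x => Nat.find (hex x), measurable_find hex fun k => ?_, fun x hx => ?_⟩
  · have hpre := fun i => T.symm.measurable.iterate i hS
    convert (hpre k).union (.iInter fun i => (hpre i).compl) using 1
    ext x
    simp
  have hsucc : ∀ k, T.symm^[k + 1] (T x) = T.symm^[k] x := fun k => by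
    rw [Function.iterate_succ_apply, T.symm_apply_apply]
  have hx' : ∃ k, T.symm^[k + 1] (T x) ∈ S := by simpa only [hsucc] using hx
  have hTx : ∃ k, T.symm^[k] (T x) ∈ S := hx'.imp' _ fun _ => id
  simp only [hfind x hx, hfind (T x) hTx]
  refine ⟨Nat.find_spec hx, fun k => Nat.find_min' hx, ?_⟩
  by_cases h0 : T x ∈ S
  · exact .inl ⟨h0, (Nat.find_eq_zero hTx).2 h0⟩
  · exact .inr ((Nat.find_comp_succ hTx hx' h0).trans (by simp only [hsucc]))

theorem exists_measurable_clock [TopologicalSpace X] [SecondCountableTopology X] [T1Space X]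
    [OpensMeasurableSpace X] (T : X ≃ᵐ X) (N : ℕ) :
    ∃ κ : X → ℕ, Measurable κ ∧ ∀ x, ¬ Function.IsPeriodicPt T N.factorial x →
      κ x ≤ 2 * N ∧ (κ (T x) = κ x + 1 ∨ κ (T x) = 0 ∧ N ≤ κ x) := by
  obtain ⟨S, hS, hsparse, hvisit⟩ := exists_isSparse_marker T N
  obtain ⟨κ, hκ, hκS⟩ := exists_measurable_elapsed T hS
  refine ⟨κ, hκ, fun x hx => ?_⟩
  obtain ⟨k, hk, hkS⟩ := hvisit x hx
  obtain ⟨hmem, hmin, hnext⟩ := hκS x ⟨k, hkS⟩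
  refine ⟨(hmin k hkS).trans hk, hnext.symm.imp_right fun ⟨hTx, h0⟩ => ⟨h0, ?_⟩⟩
  have hreturn : T^[κ x + 1] (T.symm^[κ x] x) ∈ S := by
    rwa [Function.iterate_succ_apply', iterate_symm_iterate]
  have := mt (hsparse _ hmem (κ x + 1) (by omega)) (not_not.2 hreturn)
  omega

theorem isPeriodicPt_of_iterate (T : X ≃ᵐ X) {q j : ℕ} {x : X}
    (h : Function.IsPeriodicPt T q (T^[j] x)) : Function.IsPeriodicPt T q x :=
  T.injective.iterate j ((Function.Commute.iterate_iterate_self T j q x).trans h)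

theorem add_one_mod_eq {n : ℕ} (hn : 0 < n) (k : ℕ) :
    (k + 1) % n = 0 ∧ k % n + 1 = n ∨ (k + 1) % n ≠ 0 ∧ (k + 1) % n = k % n + 1 := by
  rw [← Nat.mod_add_mod]
  rcases (Nat.succ_le_of_lt (Nat.mod_lt k hn)).eq_or_lt with h | h
  · exact .inl ⟨by rw [← Nat.succ_eq_add_one, h, Nat.mod_self], h⟩
  · exact .inr (by rw [Nat.mod_eq_of_lt h]; exact ⟨Nat.succ_ne_zero _, rfl⟩)

/- A clock is cut into blocks of length `n`, and wastes at most one block at each reset. The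
quantity `n * (k j % n) + k j` grows by at most `n + 1` per step, and falls by at least
`n ^ 2 - (n + 1)` whenever a block starts. -/
theorem sq_mul_count_mod_eq_zero_le {n : ℕ} (hn : 0 < n) {k : ℕ → ℕ}
    (hk : ∀ j, k (j + 1) = k j + 1 ∨ k (j + 1) = 0 ∧ n ^ 2 ≤ k j) (m : ℕ) :
    n ^ 2 * Nat.count (fun j => k (j + 1) % n = 0) m + (n * (k m % n) + k m) ≤
      n * (k 0 % n) + k 0 + m * (n + 1) := by
  induction m with
  | zero => simp only [Nat.count_zero]; omega
  | succ m ih =>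
    rw [Nat.count_succ]
    rcases hk m with h | ⟨h, hN⟩
    · rcases add_one_mod_eq hn (k m) with ⟨h0, hlast⟩ | ⟨h0, h1⟩
      · rw [h, if_pos h0, h0]
        nlinarith
      · rw [h, if_neg h0, h1]
        linarith
    · rw [h, if_pos (Nat.zero_mod n), Nat.zero_mod]
      linarith [Nat.zero_le (n * (k m % n))]

theorem exists_measurable_phase [TopologicalSpace X] [SecondCountableTopology X] [T1Space X]
    [OpensMeasurableSpace X] (T : X ≃ᵐ X) {n : ℕ} (hn : 0 < n) :
    ∃ τ : X → ℕ, Measurable τ ∧ (∀ x, τ x < n) ∧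
      ∀ x, ¬ Function.IsPeriodicPt T (n ^ 2).factorial x →
        (∀ j, τ (T^[j + 1] x) = 0 ∨ τ (T^[j + 1] x) = τ (T^[j] x) + 1) ∧
        ∀ m, n ^ 2 * Nat.count (fun j => τ (T^[j + 1] x) = 0) m ≤ 3 * n ^ 2 + m * (n + 1) := by
  obtain ⟨κ, hκ, hclock⟩ := exists_measurable_clock T (n ^ 2)
  have hτ_lt : ∀ x, κ x % n < n := fun x => Nat.mod_lt _ hn
  refine ⟨fun x => κ x % n, (measurable_from_top (f := (· % n))).comp hκ, hτ_lt, fun x hx => ?_⟩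
  have hstep : ∀ j, κ (T^[j + 1] x) = κ (T^[j] x) + 1 ∨
      κ (T^[j + 1] x) = 0 ∧ n ^ 2 ≤ κ (T^[j] x) := fun j => by
    rw [Function.iterate_succ_apply']
    exact (hclock _ (mt (isPeriodicPt_of_iterate T) hx)).2
  refine ⟨fun j => ?_, fun m => ?_⟩
  · rcases hstep j with h | ⟨h, -⟩
    · simpa only [h] using (add_one_mod_eq hn _).imp And.left And.right
    · simp only [h, Nat.zero_mod, true_or]
  · have hcount := sq_mul_count_mod_eq_zero_le hn (k := fun j => κ (T^[j] x)) hstep m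
    have hτ : n * (κ x % n) ≤ n ^ 2 := by nlinarith [hτ_lt x]
    have hκx := (hclock x hx).1
    simp only [Function.iterate_zero_apply] at hcount
    have hbound : n ^ 2 * Nat.count (fun j => κ (T^[j + 1] x) % n = 0) m ≤
      3 * n ^ 2 + m * (n + 1) := by omega
    exact hbound

end Marker

/-! ### The entropy of a partition into coded blocks -/

theorem sum_negMulLog_le_log {ι : Type*} {s : Finset ι} {p : ι → ℝ} {K : ℝ} (hK : 0 < K)
    (hp : ∀ i ∈ s, 0 ≤ p i) (hsum : ∑ i ∈ s, p i = 1) (hs : s.card ≤ K) :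
    ∑ i ∈ s, Real.negMulLog (p i) ≤ Real.log K := by
  have hterm : ∀ i ∈ s, K * Real.negMulLog (p i) ≤ 1 - K * p i + K * Real.log K * p i := by
    intro i hi
    have h := Real.negMulLog_le_one_sub_self (mul_nonneg hK.le (hp i hi))
    rw [Real.negMulLog_mul, Real.negMulLog] at h
    linarith
  have htotal := Finset.sum_le_sum hterm
  rw [← Finset.mul_sum, Finset.sum_add_distrib, Finset.sum_sub_distrib, ← Finset.mul_sum,
    ← Finset.mul_sum, hsum, Finset.sum_const, nsmul_one] at htotal
  exact le_of_mul_le_mul_left (by linarith) hK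

section Partition

variable {X β : Type*} [MeasurableSpace X] {P : Finset (Set X)} {s : Finset β}

theorem IsFinPartition.card_filter_nonempty_le [DecidablePred (Set.Nonempty (α := X))]
    (hP : IsFinPartition P) {code : X → β} (hs : ∀ x, code x ∈ s)
    (hcode : ∀ x y, code x = code y → ∀ A ∈ P, x ∈ A → y ∈ A) :
    (P.filter Set.Nonempty).card ≤ s.card := by
  refine Finset.card_le_card_of_forall_subsingleton (fun A b => ∃ x ∈ A, code x = b)
    (fun A hA => ?_) fun b _ A hA B hB => ?_
  · obtain ⟨x, hx⟩ := (Finset.mem_filter.1 hA).2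
    exact ⟨code x, hs x, x, hx, rfl⟩
  · obtain ⟨hA, x, hxA, rfl⟩ := hA
    obtain ⟨hB, y, hyB, hyx⟩ := hB
    have hAP := (Finset.mem_filter.1 hA).1
    have hBP := (Finset.mem_filter.1 hB).1
    by_contra hAB
    exact disjoint_left.1 (hP.2.1 A hAP B hBP hAB) hxA (hcode y x hyx B hBP hyB)

theorem IsFinPartition.entP_le_log {μ : Measure X} [IsProbabilityMeasure μ]
    (hP : IsFinPartition P) {code : X → β} (hs : ∀ x, code x ∈ s)
    (hcode : ∀ x y, code x = code y → ∀ A ∈ P, x ∈ A → y ∈ A) {K : ℝ} (hK : 0 < K)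
    (hsK : s.card ≤ K) : entP μ P ≤ ENNReal.ofReal (Real.log K) := by
  classical
  rw [entP_eq_ofReal_sum]
  refine ENNReal.ofReal_le_ofReal ?_
  have hempty : ∀ A ∈ P, μ.real A ≠ 0 → A.Nonempty := fun A _ hA => by
    by_contra h
    rw [not_nonempty_iff_eq_empty.1 h, measureReal_empty] at hA
    exact hA rfl
  have hsum : ∑ A ∈ P.filter Set.Nonempty, μ.real A = 1 := by
    rw [Finset.sum_filter_of_ne hempty, hP.sum_measureReal_eq_one]
  rw [← Finset.sum_filter_of_ne (p := Set.Nonempty) fun A hA h =>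
    hempty A hA fun h0 => h (by rw [h0, Real.negMulLog_zero])]
  refine sum_negMulLog_le_log hK (fun _ _ => measureReal_nonneg) hsum (le_trans ?_ hsK)
  exact_mod_cast hP.card_filter_nonempty_le hs hcode

theorem isFinPartition_image_fiber [DecidableEq (Set X)] [MeasurableSpace β]
    [MeasurableSingletonClass β] {f : X → β} (hf : Measurable f) (hs : ∀ x, f x ∈ s) :
    IsFinPartition (s.image fun b => f ⁻¹' {b}) := by
  refine ⟨?_, ?_, ?_⟩
  · simp only [Finset.mem_image]
    rintro _ ⟨b, -, rfl⟩
    exact hf (measurableSet_singleton b)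
  · simp only [Finset.mem_image]
    rintro _ ⟨a, -, rfl⟩ _ ⟨b, -, rfl⟩ hab
    exact (disjoint_singleton.2 fun h => hab (by rw [h])).preimage f
  · exact eq_univ_of_forall fun x =>
      ⟨f ⁻¹' {f x}, Finset.mem_coe.2 (Finset.mem_image_of_mem _ (hs x)), rfl⟩

end Partition

theorem mem_of_mem_joinN_image_fiber {X β : Type*} [DecidableEq (Set X)]
    {s : Finset β} {T : X → X} {f : X → β} {m : ℕ}
    {A : Set X} (hA : A ∈ joinN T (s.image fun b => f ⁻¹' {b}) m) {x y : X}
    (hxy : ∀ j < m, f (T^[j] x) = f (T^[j] y)) (hx : x ∈ A) : y ∈ A := by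
  obtain ⟨B, hB, rfl⟩ := mem_joinN.1 hA
  refine mem_iInter.2 fun j => ?_
  obtain ⟨b, -, hb⟩ := Finset.mem_image.1 (hB j)
  have hxj := mem_iInter.1 hx j
  rw [← hb] at hxj ⊢
  exact (hxy j j.2).symm.trans hxj

theorem card_filter_card_isSome_le {κ ι : Type*} [Fintype κ] [DecidableEq κ] [Fintype ι] {s B : ℝ}
    (hs : 0 ≤ s) :
    ((Finset.univ.filter fun g : κ → Option ι =>
        ((Finset.univ.filter fun j => (g j).isSome).card : ℝ) ≤ B).card : ℝ) ≤
      Real.exp (s * B + Fintype.card κ * (Fintype.card ι * Real.exp (-s))) := by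
  set w : Option ι → ℝ := fun a => if a.isSome then Real.exp (-s) else 1
  have hprod : ∀ g : κ → Option ι, Real.exp (-s * (Finset.univ.filter fun j => (g j).isSome).card) =
      ∏ j, w (g j) := fun g => by
    rw [Finset.prod_ite, Finset.prod_const, Finset.prod_const_one, mul_one, mul_comm,
      Real.exp_nat_mul]
  have hgen : ∑ g : κ → Option ι, ∏ j, w (g j) ≤
      Real.exp (Fintype.card κ * (Fintype.card ι * Real.exp (-s))) := by
    rw [← Fintype.piFinset_univ, ← Finset.prod_univ_sum, Finset.prod_const, Finset.card_univ,
      Real.exp_nat_mul]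
    have hw : ∑ a, w a = Fintype.card ι * Real.exp (-s) + 1 := by
      rw [Fintype.sum_option]
      simp [w, add_comm]
    rw [hw]
    gcongr
    exact Real.add_one_le_exp _
  rw [Real.exp_add, ← div_le_iff₀' (Real.exp_pos _), ← inv_mul_eq_div, ← Real.exp_neg, mul_comm]
  refine le_trans ?_ hgen
  rw [← nsmul_eq_mul]
  refine (Finset.card_nsmul_le_sum _ (fun g => ∏ j, w (g j)) _ fun g hg => ?_).trans
    (Finset.sum_le_univ_sum_of_nonneg fun g => hprod g ▸ (Real.exp_pos _).le)
  rw [← hprod, Real.exp_le_exp]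
  nlinarith [(Finset.mem_filter.1 hg).2]

theorem exists_measurable_forall_mem {X ι : Type*} [MeasurableSpace X] [MeasurableSpace ι]
    [Countable ι] [Nonempty ι] {U : ι → Set X} (hU : ∀ i, MeasurableSet (U i))
    (hcover : ∀ x, ∃ i, x ∈ U i) : ∃ f : X → ι, Measurable f ∧ ∀ x, x ∈ U (f x) := by
  classical
  obtain ⟨e, he⟩ := exists_surjective_nat ι
  have hex : ∀ x, ∃ k, x ∈ U (e k) := fun x => he.exists.1 (hcover x)
  exact ⟨fun x => e (Nat.find (hex x)),
    measurable_from_nat.comp (measurable_find hex fun k => hU (e k)),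
    fun x => Nat.find_spec (hex x)⟩

theorem exists_measurable_index {X : Type*} [PseudoMetricSpace X] [CompactSpace X] [Nonempty X]
    [MeasurableSpace X] [OpensMeasurableSpace X] {T : X → X} (hT : Continuous T) (n : ℕ) {ε : ℝ}
    (hε : 0 < ε) :
    ∃ idx : X → Fin (spanNum T n ε univ), Measurable idx ∧
      ∀ x y, idx x = idx y → bowenDist T n x y ≤ 2 * ε := by
  obtain ⟨E₀, hE₀⟩ := exists_spanning_finset hT n hε
  obtain ⟨E, hcard, hE⟩ := Nat.sInf_mem (s := {k | ∃ E : Finset X, E.card = k ∧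
    ∀ z ∈ univ, ∃ y ∈ E, bowenDist T n z y < ε}) ⟨E₀.card, E₀, rfl, fun x _ => hE₀ x⟩
  set e := E.equivFinOfCardEq (n := spanNum T n ε univ) hcard
  have hball : ∀ i, MeasurableSet {x | bowenDist T n x (e.symm i) < ε} := fun i => by
    simp only [bowenDist_lt_iff hε, ofPred_forall]
    exact ((finite_lt_nat n).isOpen_biInter fun j _ => isOpen_lt
      ((hT.iterate j).dist continuous_const) continuous_const).measurableSet
  have hcover : ∀ x, ∃ i, bowenDist T n x (e.symm i) < ε := fun x => by
    obtain ⟨y, hy, hxy⟩ := hE x (mem_univ x)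
    exact ⟨e ⟨y, hy⟩, by rwa [e.symm_apply_apply]⟩
  have : Nonempty (Fin (spanNum T n ε univ)) := (hcover (Classical.arbitrary X)).nonempty
  obtain ⟨idx, hidx, hmem⟩ := exists_measurable_forall_mem hball hcover
  refine ⟨idx, hidx, fun x y hxy => ?_⟩
  have hx : bowenDist T n x (e.symm (idx x)) < ε := hmem x
  have hy : bowenDist T n y (e.symm (idx x)) < ε := hxy ▸ hmem y
  rw [bowenDist_comm] at hy
  linarith [bowenDist_triangle (T := T) (n := n) (x := x) (y := (e.symm (idx x) : X)) (z := y)]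

section Block

variable {X ι : Type*} [MeasurableSpace X] {T : X ≃ᵐ X} {τ : X → ℕ} {idx : X → ι} {q m n : ℕ}

/-- When `τ x` is the position of `x` in its block, this records that position and the index of the
point at which the block starts. -/
def blockLabel (T : X ≃ᵐ X) (τ : X → ℕ) (idx : X → ι) (x : X) : ℕ × ι :=
  (τ x, idx (T.symm^[τ x] x))

/-- The index of the block starting at time `j + 1` along the orbit of `x`, if there is one. -/
def blockStart (T : X → X) (τ : X → ℕ) (idx : X → ι) (x : X) (j : ℕ) : Option ι :=
  if τ (T^[j + 1] x) = 0 then some (idx (T^[j + 1] x)) else none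

theorem isSome_blockStart {x : X} {j : ℕ} :
    (blockStart T τ idx x j).isSome ↔ τ (T^[j + 1] x) = 0 := by
  rw [blockStart]
  split_ifs with h <;> simp only [h, Option.isSome_some, Option.isSome_none, Bool.false_eq_true]

theorem measurable_blockLabel [Countable ι] [MeasurableSpace ι] (hτ : Measurable τ)
    (hidx : Measurable idx) : Measurable (blockLabel T τ idx) := by
  have hback : Measurable fun p : ℕ × X => T.symm^[p.1] p.2 :=
    measurable_from_prod_countable_right fun k => T.symm.measurable.iterate k
  exact hτ.prodMk (hidx.comp (hback.comp (hτ.prodMk measurable_id)))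

theorem blockLabel_apply_of_eq_add_one {x : X} (h : τ (T x) = τ x + 1) :
    blockLabel T τ idx (T x) = ((blockLabel T τ idx x).1 + 1, (blockLabel T τ idx x).2) := by
  rw [blockLabel, h, Function.iterate_succ_apply, T.symm_apply_apply, blockLabel]

theorem blockLabel_of_eq_zero {x : X} (h : τ x = 0) : blockLabel T τ idx x = (0, idx x) := by
  rw [blockLabel, h, Function.iterate_zero_apply]

theorem blockLabel_iterate_eq {x y : X}
    (hx : ∀ j, τ (T^[j + 1] x) = 0 ∨ τ (T^[j + 1] x) = τ (T^[j] x) + 1)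
    (hy : ∀ j, τ (T^[j + 1] y) = 0 ∨ τ (T^[j + 1] y) = τ (T^[j] y) + 1)
    (hlabel : blockLabel T τ idx x = blockLabel T τ idx y)
    (hstart : ∀ j < m, blockStart T τ idx x j = blockStart T τ idx y j) :
    ∀ j ≤ m, blockLabel T τ idx (T^[j] x) = blockLabel T τ idx (T^[j] y) := by
  intro j
  induction j with
  | zero => exact fun _ => hlabel
  | succ j ih =>
    intro hj
    have hj' := hstart j hj
    by_cases hx0 : τ (T^[j + 1] x) = 0
    · have hy0 : τ (T^[j + 1] y) = 0 := by
        rwa [← isSome_blockStart (idx := idx), ← hj', isSome_blockStart]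
      rw [blockStart, blockStart, if_pos hx0, if_pos hy0, Option.some_inj] at hj'
      rw [blockLabel_of_eq_zero hx0, blockLabel_of_eq_zero hy0, hj']
    · have hy0 : τ (T^[j + 1] y) ≠ 0 := by
        rwa [ne_eq, ← isSome_blockStart (idx := idx), ← hj', isSome_blockStart]
      have hx1 := (hx j).resolve_left hx0
      have hy1 := (hy j).resolve_left hy0
      rw [Function.iterate_succ_apply'] at hx1 hy1 ⊢
      rw [Function.iterate_succ_apply', blockLabel_apply_of_eq_add_one hx1,
        blockLabel_apply_of_eq_add_one hy1, ih (Nat.le_of_succ_le hj)]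

theorem dist_le_of_blockLabel_eq {X : Type*} [PseudoMetricSpace X] [MeasurableSpace X]
    {T : X ≃ᵐ X} {τ : X → ℕ} {idx : X → ι} {r : ℝ} (hr : 0 ≤ r) (hτ : ∀ x, τ x < n)
    (hidx : ∀ x y, idx x = idx y → bowenDist T n x y ≤ r) {x y : X}
    (hxy : blockLabel T τ idx x = blockLabel T τ idx y) : dist x y ≤ r := by
  obtain ⟨hpos, hstart⟩ := Prod.ext_iff.1 hxy
  simp only [blockLabel] at hpos hstart
  rw [← hpos] at hstart
  have hdist := (bowenDist_le_iff hr).1 (hidx _ _ hstart) (τ x) (hτ x)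
  rwa [iterate_symm_iterate, iterate_symm_iterate] at hdist

open scoped Classical in
/-- A code for the block labels of the first `m` points of the orbit of `x`: one period of labels if
`x` has period `q`, and otherwise the label of `x` and the blocks starting at a later time. -/
def blockCode (T : X ≃ᵐ X) (τ : X → ℕ) (idx : X → ι) (q m : ℕ) (x : X) :
    (Fin q → ℕ × ι) ⊕ (ℕ × ι) × (Fin m → Option ι) :=
  if Function.IsPeriodicPt T q x then .inl fun i => blockLabel T τ idx (T^[i] x)
  else .inr (blockLabel T τ idx x, fun j => blockStart T τ idx x j)

theorem blockLabel_iterate_eq_of_blockCode_eq (hq : 0 < q)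
    (hstep : ∀ x, ¬ Function.IsPeriodicPt T q x →
      ∀ j, τ (T^[j + 1] x) = 0 ∨ τ (T^[j + 1] x) = τ (T^[j] x) + 1) {x y : X}
    (hxy : blockCode T τ idx q m x = blockCode T τ idx q m y) :
    ∀ j < m, blockLabel T τ idx (T^[j] x) = blockLabel T τ idx (T^[j] y) := by
  intro j hj
  unfold blockCode at hxy
  split_ifs at hxy with hx hy hy
  · have h := congrFun (Sum.inl.inj hxy) ⟨j % q, Nat.mod_lt j hq⟩
    rwa [hx.iterate_mod_apply, hy.iterate_mod_apply] at h
  · obtain ⟨hlabel, hstart⟩ := Prod.ext_iff.1 (Sum.inr.inj hxy)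
    exact blockLabel_iterate_eq (hstep x hx) (hstep y hy) hlabel
      (fun i hi => congrFun hstart ⟨i, hi⟩) j hj.le

open scoped Classical in
/-- The codes that occur when positions are less than `n` and at most `B` blocks start. -/
def blockCodes (ι : Type*) [Fintype ι] (n q m : ℕ) (B : ℝ) :
    Finset ((Fin q → ℕ × ι) ⊕ (ℕ × ι) × (Fin m → Option ι)) :=
  (Fintype.piFinset fun _ => Finset.range n ×ˢ Finset.univ).disjSum
    ((Finset.range n ×ˢ Finset.univ) ×ˢ Finset.univ.filter fun g =>
      ((Finset.univ.filter fun j => (g j).isSome).card : ℝ) ≤ B)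

variable [Fintype ι]

theorem blockLabel_mem (hτ : ∀ x, τ x < n) (x : X) :
    blockLabel T τ idx x ∈ Finset.range n ×ˢ (Finset.univ : Finset ι) :=
  Finset.mem_product.2 ⟨Finset.mem_range.2 (hτ x), Finset.mem_univ _⟩

theorem blockCode_mem_blockCodes {B : ℝ} (hτ : ∀ x, τ x < n)
    (hcount : ∀ x, ¬ Function.IsPeriodicPt T q x →
      (Nat.count (fun j => τ (T^[j + 1] x) = 0) m : ℝ) ≤ B) (x : X) :
    blockCode T τ idx q m x ∈ blockCodes ι n q m B := by
  classical
  unfold blockCode blockCodes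
  split_ifs with hx
  · exact Finset.inl_mem_disjSum.2 (Fintype.mem_piFinset.2 fun i => blockLabel_mem hτ _)
  · refine Finset.inr_mem_disjSum.2 (Finset.mem_product.2 ⟨blockLabel_mem hτ x, ?_⟩)
    refine Finset.mem_filter.2 ⟨Finset.mem_univ _, le_of_eq_of_le ?_ (hcount x hx)⟩
    simp only [isSome_blockStart, Nat.count_eq_card_filter_range, Finset.card_filter,
      Finset.sum_range]

theorem card_blockCodes_le {s B : ℝ} (hs : 0 ≤ s) :
    ((blockCodes ι n q m B).card : ℝ) ≤ (n * Fintype.card ι) ^ q +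
      n * Fintype.card ι * Real.exp (s * B + m * (Fintype.card ι * Real.exp (-s))) := by
  classical
  have hcard := card_filter_card_isSome_le (κ := Fin m) (ι := ι) (B := B) hs
  rw [Fintype.card_fin] at hcard
  rw [blockCodes, Finset.card_disjSum, Fintype.card_piFinset, Finset.prod_const, Finset.card_univ,
    Fintype.card_fin, Finset.card_product _ (Finset.univ.filter _), Finset.card_product,
    Finset.card_range, Finset.card_univ]
  push_cast
  gcongr

theorem card_blockCodes_le_exp [Nonempty ι] (hn : 0 < n) {B : ℝ} (hB : 0 ≤ B) :
    ((blockCodes ι n q m B).card : ℝ) ≤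
      2 * Real.exp ((q + 1 + B) * Real.log (n * Fintype.card ι) + m / n) := by
  have hn' : (0 : ℝ) < n := Nat.cast_pos.2 hn
  have hcard : (0 : ℝ) < Fintype.card ι := Nat.cast_pos.2 Fintype.card_pos
  have hv : 0 < n * (Fintype.card ι : ℝ) := mul_pos hn' hcard
  have hlog : 0 ≤ Real.log (n * Fintype.card ι) := by
    exact_mod_cast Real.log_natCast_nonneg (n * Fintype.card ι)
  have hexp : Fintype.card ι * Real.exp (-Real.log (n * Fintype.card ι)) = 1 / n := by
    rw [Real.exp_neg, Real.exp_log hv]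
    field_simp
  refine (card_blockCodes_le hlog).trans ?_
  rw [hexp]
  nth_rw 1 2 [← Real.exp_log hv]
  rw [← Real.exp_nat_mul, ← Real.exp_add, two_mul]
  have hq : (0 : ℝ) ≤ q * Real.log (n * Fintype.card ι) := by positivity
  have hBlog := mul_nonneg hB hlog
  have hm : (0 : ℝ) ≤ m / n := by positivity
  have hmn : m * (1 / n : ℝ) = m / n := mul_one_div _ _
  refine add_le_add (Real.exp_le_exp.2 ?_) (Real.exp_le_exp.2 ?_) <;> linarith

open scoped Classical in
/-- The partition of `X` by block labels with position less than `n`. -/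
def blockPartition (T : X ≃ᵐ X) (τ : X → ℕ) (idx : X → ι) (n : ℕ) : Finset (Set X) :=
  (Finset.range n ×ˢ Finset.univ).image fun b => blockLabel T τ idx ⁻¹' {b}

variable [MeasurableSpace ι] [MeasurableSingletonClass ι]

theorem isFinPartition_blockPartition (hτ : Measurable τ) (hidx : Measurable idx)
    (hlt : ∀ x, τ x < n) : IsFinPartition (blockPartition T τ idx n) := by
  classical
  exact isFinPartition_image_fiber (measurable_blockLabel hτ hidx) (blockLabel_mem hlt)

theorem entP_joinN_blockPartition_le {μ : Measure X} [IsProbabilityMeasure μ] [Nonempty ι]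
    (hq : 0 < q) (hτ : Measurable τ) (hidx : Measurable idx) (hlt : ∀ x, τ x < n)
    (hstep : ∀ x, ¬ Function.IsPeriodicPt T q x →
      ∀ j, τ (T^[j + 1] x) = 0 ∨ τ (T^[j + 1] x) = τ (T^[j] x) + 1) {B : ℝ} (hB : 0 ≤ B)
    (hcount : ∀ x, ¬ Function.IsPeriodicPt T q x →
      (Nat.count (fun j => τ (T^[j + 1] x) = 0) m : ℝ) ≤ B) :
    entP μ (joinN T (blockPartition T τ idx n) m) ≤
      ENNReal.ofReal (Real.log 2 + ((q + 1 + B) * Real.log (n * Fintype.card ι) + m / n)) := by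
  classical
  have hn : 0 < n := (nonempty_of_isProbabilityMeasure μ).elim fun x => (hlt x).pos
  have hpart := isFinPartition_joinN T.measurable
    (isFinPartition_blockPartition (T := T) hτ hidx hlt) m
  have hent := hpart.entP_le_log (μ := μ)
    (blockCode_mem_blockCodes (T := T) (idx := idx) hlt hcount)
    (fun x y hxy A hA => mem_of_mem_joinN_image_fiber hA
      (blockLabel_iterate_eq_of_blockCode_eq hq hstep hxy)) (by positivity)
    (card_blockCodes_le_exp hn hB)
  rwa [Real.log_mul two_ne_zero (Real.exp_ne_zero _), Real.log_exp] at hent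

end Block

theorem entRate_le_ofReal {X : Type*} [MeasurableSpace X] {T : X → X} {μ : Measure X}
    {P : Finset (Set X)} {h C : ℝ}
    (hP : ∀ m : ℕ, entP μ (joinN T P m) ≤ ENNReal.ofReal (h * m + C)) :
    entRate T μ P ≤ ENNReal.ofReal h := by
  have hlim := tendsto_ofReal_mul_add_div_ofReal tendsto_natCast_atTop_atTop h C
  rw [← hlim.liminf_eq, entRate]
  refine liminf_le_liminf (.of_forall fun m => ?_)
  rw [ENNReal.ofReal_natCast]
  gcongr
  exact hP m

theorem limsup_mul_le_of_tendsto_one {α : Type*} {l : Filter α} [l.NeBot] {u v : α → ℝ≥0∞}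
    (hu : Tendsto u l (𝓝 1)) : limsup (fun i => u i * v i) l ≤ limsup v l := by
  have h := ENNReal.limsup_mul_le' (u := u) (v := v) (f := l)
  rw [hu.limsup_eq, one_mul] at h
  exact h (.inl one_ne_zero) (.inl ENNReal.one_ne_top)

theorem liminf_mul_le_of_tendsto_one {α : Type*} {l : Filter α} [l.NeBot] {u v : α → ℝ≥0∞}
    (hu : Tendsto u l (𝓝 1)) : liminf (fun i => u i * v i) l ≤ liminf v l := by
  have h := ENNReal.liminf_mul_le (u := u) (v := v) (f := l)
  rw [hu.limsup_eq, one_mul] at h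
  exact h (.inl one_ne_zero) (.inl ENNReal.one_ne_top)

theorem le_limsup_of_eventually_le_mul_add {α : Type*} {l : Filter α} [l.NeBot] {u v w : α → ℝ≥0∞}
    {c : ℝ≥0∞} (hu : Tendsto u l (𝓝 1)) (hw : Tendsto w l (𝓝 0))
    (hc : ∀ᶠ i in l, c ≤ u i * v i + w i) : c ≤ limsup v l := by
  have hsub : Tendsto (fun i => c - w i) l (𝓝 (c - 0)) :=
    ENNReal.Tendsto.sub tendsto_const_nhds hw (.inr ENNReal.zero_ne_top)
  calc c = limsup (fun i => c - w i) l := by rw [hsub.limsup_eq, tsub_zero]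
    _ ≤ limsup (fun i => u i * v i) l :=
      limsup_le_limsup (hc.mono fun i hi => tsub_le_iff_right.2 hi)
    _ ≤ limsup v l := limsup_mul_le_of_tendsto_one hu

section CompactMetric

variable {X : Type*} [MetricSpace X] [CompactSpace X] [MeasurableSpace X] [BorelSpace X]

theorem infEntRate_two_mul_le_ofReal (T : X ≃ₜ X) (μ : Measure X) [IsProbabilityMeasure μ]
    {ε : ℝ} (hε : 0 < ε) {n : ℕ} (hn : 0 < n) :
    infEntRate T μ (2 * ε) ≤ ENNReal.ofReal
      ((n + 1) / n ^ 2 * (Real.log n + Real.log (spanNum T n ε univ)) + 1 / n) := by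
  have hX : Nonempty X := nonempty_of_isProbabilityMeasure μ
  obtain ⟨idx, hidx, hdist⟩ := exists_measurable_index T.continuous n hε
  obtain ⟨τ, hτ, hlt, hphase⟩ := exists_measurable_phase T.toMeasurableEquiv hn
  have hι : Nonempty (Fin (spanNum T n ε univ)) := hX.map idx
  have hdiam : ∀ s ∈ blockPartition T.toMeasurableEquiv τ idx n, Metric.diam s ≤ 2 * ε := by
    intro s hs
    obtain ⟨b, -, rfl⟩ := Finset.mem_image.1 hs
    exact Metric.diam_le_of_forall_dist_le (by positivity) fun x hx y hy =>
      dist_le_of_blockLabel_eq (by positivity) hlt hdist (hx.trans hy.symm)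
  refine iInf_le_of_le _ <| iInf₂_le_of_le (isFinPartition_blockPartition hτ hidx hlt) hdiam ?_
  have hspan : spanNum T n ε univ ≠ 0 := Fin.pos'.ne'
  rw [← Real.log_mul (by positivity) (by positivity)]
  refine entRate_le_ofReal
    (C := Real.log 2 + ((n ^ 2).factorial + 4) * Real.log (n * spanNum T n ε univ)) fun m => ?_
  have hcount : ∀ x, ¬ Function.IsPeriodicPt T.toMeasurableEquiv (n ^ 2).factorial x →
      (Nat.count (fun j => τ (T.toMeasurableEquiv^[j + 1] x) = 0) m : ℝ) ≤
        3 + m * ((n + 1) / n ^ 2) := by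
    intro x hx
    have h : (n ^ 2 * Nat.count (fun j => τ (T.toMeasurableEquiv^[j + 1] x) = 0) m : ℝ) ≤
      3 * n ^ 2 + m * (n + 1) := mod_cast (hphase x hx).2 m
    have hn' : (0 : ℝ) < n ^ 2 := by positivity
    refine le_of_mul_le_mul_left (h.trans_eq ?_) hn'
    field_simp
  refine (entP_joinN_blockPartition_le (Nat.factorial_pos _) hτ hidx hlt
    (fun x hx => (hphase x hx).1) (by positivity) hcount).trans_eq ?_
  rw [Fintype.card_fin]
  ring_nf

theorem infEntRate_two_mul_le_spanGrowth (T : X ≃ₜ X) (μ : Measure X) [IsProbabilityMeasure μ]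
    {ε : ℝ} (hε : 0 < ε) : infEntRate T μ (2 * ε) ≤ spanGrowth T ε := by
  have hinv : Tendsto (fun n : ℕ => 1 + 1 / (n : ℝ)) atTop (𝓝 1) := by
    simpa using tendsto_one_div_atTop_nhds_zero_nat.const_add (1 : ℝ)
  have hlog : Tendsto (fun n : ℕ => Real.log n / n) atTop (𝓝 0) :=
    Real.isLittleO_log_id_atTop.tendsto_div_nhds_zero.comp tendsto_natCast_atTop_atTop
  have herr : Tendsto (fun n : ℕ => (1 + 1 / (n : ℝ)) * (Real.log n / n) + 1 / n) atTop (𝓝 0) := by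
    simpa using (hinv.mul hlog).add tendsto_one_div_atTop_nhds_zero_nat
  refine le_limsup_of_eventually_le_mul_add (ENNReal.ofReal_one ▸ ENNReal.tendsto_ofReal hinv)
    (ENNReal.ofReal_zero ▸ ENNReal.tendsto_ofReal herr) ?_
  filter_upwards [eventually_gt_atTop 0] with n hn
  have hn' : (0 : ℝ) < n := Nat.cast_pos.2 hn
  refine (infEntRate_two_mul_le_ofReal T μ hε hn).trans (le_of_eq ?_)
  have : 0 ≤ Real.log n := Real.log_natCast_nonneg n
  have : 0 ≤ Real.log (spanNum T n ε univ) := Real.log_natCast_nonneg _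
  rw [← ENNReal.ofReal_natCast n, ← ENNReal.ofReal_div_of_pos hn',
    ← ENNReal.ofReal_mul (by positivity), ← ENNReal.ofReal_add (by positivity) (by positivity)]
  congr 1
  field_simp
  ring

end CompactMetric

/-! ### Rescaling and the variational principle -/

section Rescaling

variable {F G : ℝ → ℝ≥0∞} {a : ℝ}

theorem map_mulLeft_nhdsGT_zero (ha : 0 < a) : map (a * ·) (𝓝[>] (0 : ℝ)) = 𝓝[>] 0 := by
  nth_rw 1 [← comap_mulLeft_nhdsGT_zero ha]
  exact map_comap_of_surjective (mul_left_surjective₀ ha.ne') _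

theorem tendsto_log_one_div_div_log_one_div_mul (ha : 0 < a) :
    Tendsto (fun ε : ℝ =>
      ENNReal.ofReal (Real.log (1 / ε)) / ENNReal.ofReal (Real.log (1 / (a * ε))))
      (𝓝[>] 0) (𝓝 1) := by
  have hscale : Tendsto (fun ε : ℝ => Real.log (1 / (a * ε))) (𝓝[>] 0) atTop :=
    tendsto_log_one_div_nhdsGT_zero.comp (map_mulLeft_nhdsGT_zero ha).le
  have hlim := tendsto_ofReal_mul_add_div_ofReal hscale 1 (Real.log a)
  rw [ENNReal.ofReal_one] at hlim
  refine hlim.congr' ?_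
  filter_upwards [self_mem_nhdsWithin] with ε hε
  have hlog : Real.log (1 / ε) = 1 * Real.log (1 / (a * ε)) + Real.log a := by
    rw [one_div, one_div, Real.log_inv, Real.log_inv, Real.log_mul ha.ne' (ne_of_gt hε)]
    ring
  rw [hlog]

theorem eventually_div_log_one_div_mul_le (h : ∀ ε : ℝ, 0 < ε → F (a * ε) ≤ G ε) :
    ∀ᶠ ε : ℝ in 𝓝[>] 0, F (a * ε) / ENNReal.ofReal (Real.log (1 / (a * ε))) ≤
      ENNReal.ofReal (Real.log (1 / ε)) / ENNReal.ofReal (Real.log (1 / (a * ε))) *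
        (G ε / ENNReal.ofReal (Real.log (1 / ε))) := by
  filter_upwards [self_mem_nhdsWithin,
    tendsto_log_one_div_nhdsGT_zero.eventually_gt_atTop 0] with ε hε hlog
  rw [mul_comm (_ / _), ← mul_div_assoc,
    ENNReal.div_mul_cancel (ENNReal.ofReal_pos.2 hlog).ne' ENNReal.ofReal_ne_top]
  gcongr
  exact h ε hε

theorem limsup_div_log_le_of_forall_mul_le (ha : 0 < a) (h : ∀ ε : ℝ, 0 < ε → F (a * ε) ≤ G ε) :
    limsup (fun ε : ℝ => F ε / ENNReal.ofReal (Real.log (1 / ε))) (𝓝[>] 0) ≤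
      limsup (fun ε : ℝ => G ε / ENNReal.ofReal (Real.log (1 / ε))) (𝓝[>] 0) := by
  nth_rw 1 [← map_mulLeft_nhdsGT_zero ha]
  rw [← limsup_comp]
  exact (limsup_le_limsup (eventually_div_log_one_div_mul_le h)).trans
    (limsup_mul_le_of_tendsto_one (tendsto_log_one_div_div_log_one_div_mul ha))

theorem liminf_div_log_le_of_forall_mul_le (ha : 0 < a) (h : ∀ ε : ℝ, 0 < ε → F (a * ε) ≤ G ε) :
    liminf (fun ε : ℝ => F ε / ENNReal.ofReal (Real.log (1 / ε))) (𝓝[>] 0) ≤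
      liminf (fun ε : ℝ => G ε / ENNReal.ofReal (Real.log (1 / ε))) (𝓝[>] 0) := by
  nth_rw 1 [← map_mulLeft_nhdsGT_zero ha]
  rw [← liminf_comp]
  exact (liminf_le_liminf (eventually_div_log_one_div_mul_le h)).trans
    (liminf_mul_le_of_tendsto_one (tendsto_log_one_div_div_log_one_div_mul ha))

end Rescaling

section InvariantMeasures

variable {X : Type*} [MeasurableSpace X] {T : X → X}

theorem iSupInvariant_dimFLower_le_dimFUpper (F : Measure X → ℝ → ℝ≥0∞) :
    iSupInvariant T (dimFLower F) ≤ iSupInvariant T (dimFUpper F) :=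
  iSupInvariant_le fun _ hμ hT =>
    (liminf_le_limsup (by isBoundedDefault)).trans (le_iSupInvariant (dimFUpper F) hμ hT)

theorem iSupInvariant_dimFLower_le_liminf (F : Measure X → ℝ → ℝ≥0∞) :
    iSupInvariant T (dimFLower F) ≤ liminf (fun ε : ℝ =>
      iSupInvariant T (F · ε) / ENNReal.ofReal (Real.log (1 / ε))) (𝓝[>] 0) :=
  iSupInvariant_le fun _ hμ hT => liminf_le_liminf <| .of_forall fun ε =>
    ENNReal.div_le_div_right (le_iSupInvariant (F · ε) hμ hT) _

theorem iSupInvariant_dimFUpper_le_limsup (F : Measure X → ℝ → ℝ≥0∞) :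
    iSupInvariant T (dimFUpper F) ≤ limsup (fun ε : ℝ =>
      iSupInvariant T (F · ε) / ENNReal.ofReal (Real.log (1 / ε))) (𝓝[>] 0) :=
  iSupInvariant_le fun _ hμ hT => limsup_le_limsup <| .of_forall fun ε =>
    ENNReal.div_le_div_right (le_iSupInvariant (F · ε) hμ hT) _

end InvariantMeasures

theorem iSupInvariant_infEntRate_two_mul_le_spanGrowth {X : Type*} [MetricSpace X] [CompactSpace X]
    [MeasurableSpace X] [BorelSpace X] (T : X ≃ₜ X) {ε : ℝ} (hε : 0 < ε) :
    iSupInvariant T (infEntRate T · (2 * ε)) ≤ spanGrowth T ε :=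
  iSupInvariant_le fun μ _ _ => infEntRate_two_mul_le_spanGrowth T μ hε

end MMD

theorem stmt13_general {X : Type*} [MetricSpace X] [CompactSpace X] [MeasurableSpace X]
    [BorelSpace X] (T : X ≃ₜ X) (hd : mdimTop (⇑T) = mdimMUpper (⇑T)) :
    mdimMLower (⇑T) = mdimMUpper (⇑T) ∧
    mdimMUpper (⇑T) =
      (⨆ (μ : Measure X) (_ : IsProbabilityMeasure μ) (_ : MeasurePreserving (⇑T) μ μ),
        Filter.liminf (fun ε : ℝ => infEntRate (⇑T) μ ε / ENNReal.ofReal (Real.log (1 / ε)))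
          (nhdsWithin 0 (Set.Ioi 0))) ∧
    mdimMUpper (⇑T) =
      (⨆ (μ : Measure X) (_ : IsProbabilityMeasure μ) (_ : MeasurePreserving (⇑T) μ μ),
        Filter.limsup (fun ε : ℝ => infEntRate (⇑T) μ ε / ENNReal.ofReal (Real.log (1 / ε)))
          (nhdsWithin 0 (Set.Ioi 0))) ∧
    mdimMUpper (⇑T) =
      Filter.liminf (fun ε : ℝ =>
        (⨆ (μ : Measure X) (_ : IsProbabilityMeasure μ) (_ : MeasurePreserving (⇑T) μ μ),
          infEntRate (⇑T) μ ε) / ENNReal.ofReal (Real.log (1 / ε)))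
        (nhdsWithin 0 (Set.Ioi 0)) ∧
    mdimMUpper (⇑T) =
      Filter.limsup (fun ε : ℝ =>
        (⨆ (μ : Measure X) (_ : IsProbabilityMeasure μ) (_ : MeasurePreserving (⇑T) μ μ),
          infEntRate (⇑T) μ ε) / ENNReal.ofReal (Real.log (1 / ε)))
        (nhdsWithin 0 (Set.Ioi 0)) := by
  have hlow : mdimMUpper T ≤ iSupInvariant T (dimFLower (infEntRate T)) :=
    hd.symm.le.trans (mdimTop_le_iSupInvariant_dimFLower T.continuous)
  have hup := iSupInvariant_dimFLower_le_dimFUpper (T := T) (infEntRate T)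
  have hlow_liminf := iSupInvariant_dimFLower_le_liminf (T := T) (infEntRate T)
  have hup_limsup := iSupInvariant_dimFUpper_le_limsup (T := T) (infEntRate T)
  have hliminf := liminf_div_log_le_of_forall_mul_le
    (F := fun ε => iSupInvariant T (infEntRate T · ε)) two_pos fun ε hε =>
      iSupInvariant_infEntRate_two_mul_le_spanGrowth T hε
  have hlimsup := limsup_div_log_le_of_forall_mul_le
    (F := fun ε => iSupInvariant T (infEntRate T · ε)) two_pos fun ε hε =>
      iSupInvariant_infEntRate_two_mul_le_spanGrowth T hε
  have hmdim : mdimMLower T ≤ mdimMUpper T := liminf_le_limsup (by isBoundedDefault)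
  exact ⟨le_antisymm hmdim (hlow.trans (hlow_liminf.trans hliminf)),
    le_antisymm hlow (hlow_liminf.trans (hliminf.trans hmdim)),
    le_antisymm (hlow.trans hup) (hup_limsup.trans hlimsup),
    le_antisymm (hlow.trans hlow_liminf) (hliminf.trans hmdim),
    le_antisymm (hlow.trans (hup.trans hup_limsup)) hlimsup⟩

/-- Theorem 1.2 (second part): if `(X,T)` has the marker property and `d` is a compatible
metric with `mdim(X,T) = mdim_M^+(T,X,d)`, then the lower and upper metric mean dimensions
coincide and are given by the (exchangeable) sup/liminf and sup/limsup variational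
expressions in terms of Rényi information dimension. -/
theorem stmt13 {X : Type*} [MetricSpace X] [CompactSpace X] [MeasurableSpace X] [BorelSpace X]
    (T : X ≃ₜ X) (hmk : MarkerProperty T)
    (hd : mdimTop (⇑T) = mdimMUpper (⇑T)) :
    mdimMLower (⇑T) = mdimMUpper (⇑T) ∧
    mdimMUpper (⇑T) =
      (⨆ (μ : Measure X) (_ : IsProbabilityMeasure μ) (_ : MeasurePreserving (⇑T) μ μ),
        Filter.liminf (fun ε : ℝ => infEntRate (⇑T) μ ε / ENNReal.ofReal (Real.log (1 / ε)))
          (nhdsWithin 0 (Set.Ioi 0))) ∧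
    mdimMUpper (⇑T) =
      (⨆ (μ : Measure X) (_ : IsProbabilityMeasure μ) (_ : MeasurePreserving (⇑T) μ μ),
        Filter.limsup (fun ε : ℝ => infEntRate (⇑T) μ ε / ENNReal.ofReal (Real.log (1 / ε)))
          (nhdsWithin 0 (Set.Ioi 0))) ∧
    mdimMUpper (⇑T) =
      Filter.liminf (fun ε : ℝ =>
        (⨆ (μ : Measure X) (_ : IsProbabilityMeasure μ) (_ : MeasurePreserving (⇑T) μ μ),
          infEntRate (⇑T) μ ε) / ENNReal.ofReal (Real.log (1 / ε)))
        (nhdsWithin 0 (Set.Ioi 0)) ∧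
    mdimMUpper (⇑T) =
      Filter.limsup (fun ε : ℝ =>
        (⨆ (μ : Measure X) (_ : IsProbabilityMeasure μ) (_ : MeasurePreserving (⇑T) μ μ),
          infEntRate (⇑T) μ ε) / ENNReal.ofReal (Real.log (1 / ε)))
        (nhdsWithin 0 (Set.Ioi 0)) := by
  exact stmt13_general T hd
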